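/- Let Σ_A(ℕ) be a topologically mixing, finitely primitive (BIP) countable Markov shift and let f : Σ_A(ℕ) → ℝ satisfy the Walters condition with Var_1 f < ∞ and finite Gurevich pressure P(f) < ∞. Assume f admits a unique maximizing measure μ. For each β > 1 let μ_β denote the unique equilibrium (Gibbs) measure of βf. Then the family (μ_β)_β satisfies a Large Deviation Principle: for every nonempty cylinder C of Σ_A(ℕ), lim_{β→∞} (1/β) log μ_β(C) = −inf_{x∈C} I(x), where I(x) = −Σ_{j=0}^∞ (f + V − V∘σ − m(f))(σ^j(x)) and V is any bounded calibrated sub-action for f. -/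

import Mathlib

open Filter Topology MeasureTheory
open scoped ENNReal

/-- The countable Markov shift over alphabet ℕ determined by the 0-1 matrix `A`. -/
def MarkovShift (A : ℕ → ℕ → Bool) : Type :=
  {x : ℕ → ℕ // ∀ i, A (x i) (x (i + 1)) = true}

namespace MarkovShift

variable {A : ℕ → ℕ → Bool}

instance : TopologicalSpace (MarkovShift A) :=
  instTopologicalSpaceSubtype

instance : MeasurableSpace (MarkovShift A) := borel _

instance : BorelSpace (MarkovShift A) := ⟨rfl⟩

/-- The shift map. -/
def shift (x : MarkovShift A) : MarkovShift A :=
  ⟨fun n => x.1 (n + 1), fun i => x.2 (i + 1)⟩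

/-- The cylinder set determined by a finite word. -/
def cylinder (w : List ℕ) : Set (MarkovShift A) :=
  {x | ∀ i : Fin w.length, x.1 i = w.get i}

/-- The cylinder set determined by the first `m` coordinates of `x`. -/
def cylOf (x : MarkovShift A) (m : ℕ) : Set (MarkovShift A) :=
  {y | ∀ i < m, y.1 i = x.1 i}

/-- A symbol is admissible when its cylinder is nonempty. -/
def Admissible (A : ℕ → ℕ → Bool) (a : ℕ) : Prop :=
  ∃ x : MarkovShift A, x.1 0 = a

/-- Topologically mixing. -/
def TopologicallyMixing (A : ℕ → ℕ → Bool) : Prop :=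
  ∀ a b : ℕ, Admissible A a → Admissible A b →
    ∃ N : ℕ, ∀ n ≥ N, ∃ x : MarkovShift A, x.1 0 = a ∧ (shift^[n] x).1 0 = b

/-- Finitely primitive (BIP). -/
def FinitelyPrimitive (A : ℕ → ℕ → Bool) : Prop :=
  ∃ (K₀ : ℕ) (F : Finset ℕ), ∀ a b : ℕ, Admissible A a → Admissible A b →
    ∃ w : List ℕ, w.length = K₀ ∧ (∀ c ∈ w, c ∈ F) ∧
      List.Chain' (fun u v => A u v = true) (a :: (w ++ [b]))

/-- First coordinate where two distinct points disagree. -/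
noncomputable def firstDiff (x y : MarkovShift A) (h : x ≠ y) : ℕ :=
  Nat.find (Function.ne_iff.mp (fun hxy : x.1 = y.1 => h (Subtype.ext hxy)))

open Classical in
/-- The metric `d(x,y) = r^{t(x,y)}`. -/
noncomputable def dist' (r : ℝ) (x y : MarkovShift A) : ℝ :=
  if h : x = y then 0 else r ^ firstDiff x y h

/-- Birkhoff sum `S_n f`. -/
def birkhoff (f : MarkovShift A → ℝ) (n : ℕ) (x : MarkovShift A) : ℝ :=
  ∑ j ∈ Finset.range n, f (shift^[j] x)

/-- The set of values `|S_n f x - S_n f y|` over pairs agreeing on the first `m` coordinates. -/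
def varSet (f : MarkovShift A → ℝ) (n m : ℕ) : Set ℝ :=
  {c | ∃ x y : MarkovShift A, (∀ i < m, x.1 i = y.1 i) ∧ c = |birkhoff f n x - birkhoff f n y|}

/-- `Var_m (S_n f)`. -/
noncomputable def varBirk (f : MarkovShift A → ℝ) (n m : ℕ) : ℝ := sSup (varSet f n m)

/-- `Var_1 f < ∞`. -/
def Var1Finite (f : MarkovShift A → ℝ) : Prop := BddAbove (varSet f 1 1)

/-- The set whose supremum is `sup_{n ≥ 1} Var_{n+k}(S_n f)`. -/
def waltersSet (f : MarkovShift A → ℝ) (k : ℕ) : Set ℝ :=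
  {c | ∃ n, 1 ≤ n ∧ c ∈ varSet f n (n + k)}

/-- `M_k = sup_{n ≥ 1} Var_{n+k}(S_n f)`. -/
noncomputable def waltersSup (f : MarkovShift A → ℝ) (k : ℕ) : ℝ := sSup (waltersSet f k)

/-- The Walters condition. -/
def SatisfiesWalters (f : MarkovShift A → ℝ) : Prop :=
  (∀ k, 1 ≤ k → BddAbove (waltersSet f k)) ∧
    Tendsto (fun k => waltersSup f k) atTop (𝓝 0)

/-- The partition function `Z_n(f,a) = Σ_{σ^n x = x, x₀ = a} e^{S_n f (x)}`. -/
noncomputable def partitionSum (f : MarkovShift A → ℝ) (n : ℕ) (a : ℕ) : ℝ :=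
  ∑' x : {x : MarkovShift A // shift^[n] x = x ∧ x.1 0 = a}, Real.exp (birkhoff f n x.1)

/-- `f` has (finite) Gurevich pressure `p`. -/
def HasGurevichPressure (f : MarkovShift A → ℝ) (p : ℝ) : Prop :=
  ∀ a : ℕ, Admissible A a →
    (∀ n, 1 ≤ n → Summable fun x : {x : MarkovShift A // shift^[n] x = x ∧ x.1 0 = a} =>
        Real.exp (birkhoff f n x.1)) ∧
    Tendsto (fun n : ℕ => (1 / (n : ℝ)) * Real.log (partitionSum f n a)) atTop (𝓝 p)

/-- σ-invariant Borel probability measure. -/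
def IsInvariantProb (μ : Measure (MarkovShift A)) : Prop :=
  IsProbabilityMeasure μ ∧ μ.map shift = μ

/-- `m(f)`, the maximal ergodic average. -/
noncomputable def mf (f : MarkovShift A → ℝ) : ℝ :=
  sSup {c | ∃ μ : Measure (MarkovShift A),
    IsInvariantProb μ ∧ Integrable f μ ∧ ∫ x, f x ∂μ = c}

/-- A maximizing measure for `f`. -/
def IsMaximizing (f : MarkovShift A → ℝ) (μ : Measure (MarkovShift A)) : Prop :=
  IsInvariantProb μ ∧ Integrable f μ ∧ ∫ x, f x ∂μ = mf f

/-- Bounded real valued function. -/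
def BoundedFun (g : MarkovShift A → ℝ) : Prop := ∃ C, ∀ x, |g x| ≤ C

/-- A bounded calibrated sub-action for `f`. -/
def IsCalibratedSubaction (f V : MarkovShift A → ℝ) : Prop :=
  Continuous V ∧ BoundedFun V ∧
    (∀ x, f x + V x - V (shift x) - mf f ≤ 0) ∧
    (∀ y, ∃ x, shift x = y ∧ f x + V x - V (shift x) - mf f = 0)

/-- The Ruelle transfer operator `(L_g u)(x) = Σ_{σ y = x} e^{g(y)} u(y)`. -/
noncomputable def ruelle (g u : MarkovShift A → ℝ) (x : MarkovShift A) : ℝ :=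
  ∑' y : {y : MarkovShift A // shift y = x}, Real.exp (g y.1) * u y.1

/-- Ruelle-Perron-Frobenius data for the potential `f` with pressure `p`:
eigenfunction `h`, eigenmeasure `ν`. -/
def IsRPF (f : MarkovShift A → ℝ) (p : ℝ) (h : MarkovShift A → ℝ)
    (ν : Measure (MarkovShift A)) : Prop :=
  Continuous h ∧ (∀ x, 0 < h x) ∧
    (∀ x, ruelle f h x = Real.exp p * h x) ∧
    IsProbabilityMeasure ν ∧
    (∀ g : MarkovShift A → ℝ, Continuous g → BoundedFun g →
      ∫ x, ruelle f g x ∂ν = Real.exp p * ∫ x, g x ∂ν) ∧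
    ∫ x, h x ∂ν = 1

/-- The Gibbs measure `dμ = h dν`. -/
noncomputable def gibbs (h : MarkovShift A → ℝ) (ν : Measure (MarkovShift A)) :
    Measure (MarkovShift A) :=
  ν.withDensity fun x => ENNReal.ofReal (h x)

/-- The Mañé potential `S_f(x,y)` (with respect to the metric of parameter `r`). -/
noncomputable def manePot (r : ℝ) (f : MarkovShift A → ℝ) (x y : MarkovShift A) : EReal :=
  ⨅ ε : {ε : ℝ // 0 < ε}, ⨆ n : {n : ℕ // 1 ≤ n},
    ⨆ _z : {z : MarkovShift A // dist' r x z < ε.1 ∧ shift^[n.1] z = y},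
      ((birkhoff (fun w => f w - mf f) n.1 _z.1 : ℝ) : EReal)

/-- The (topological) support of a measure. -/
def msupport (μ : Measure (MarkovShift A)) : Set (MarkovShift A) :=
  {x | ∀ U : Set (MarkovShift A), IsOpen U → x ∈ U → 0 < μ U}

end MarkovShift

namespace MarkovShift


section Helpers

variable {A : ℕ → ℕ → Bool}

theorem isClosed_adm (A : ℕ → ℕ → Bool) :
    IsClosed {x : ℕ → ℕ | ∀ i, A (x i) (x (i + 1)) = true} := by
  rw [Set.ofPred_forall]
  refine isClosed_iInter fun i => ?_
  have h2 : Continuous fun x : ℕ → ℕ => (x i, x (i + 1)) :=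
    (continuous_apply i).prodMk (continuous_apply (i + 1))
  have : Continuous fun x : ℕ → ℕ => A (x i) (x (i + 1)) :=
    (continuous_of_discreteTopology (f := fun p : ℕ × ℕ => A p.1 p.2)).comp h2
  exact isClosed_eq this continuous_const

instance instPolishShift : PolishSpace (MarkovShift A) := by
  have hc := isClosed_adm A
  exact hc.polishSpace

instance instMetrizableShift : TopologicalSpace.MetrizableSpace (MarkovShift A) := inferInstance

theorem continuous_coord (i : ℕ) : Continuous fun x : MarkovShift A => x.1 i :=
  (continuous_apply i).comp continuous_subtype_val

theorem continuous_into {X : Type*} [TopologicalSpace X] {g : X → MarkovShift A}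
    (hg : ∀ i, Continuous fun x => (g x).1 i) : Continuous g :=
  Continuous.subtype_mk (continuous_pi hg) _

theorem continuous_shift : Continuous (shift : MarkovShift A → MarkovShift A) :=
  continuous_into fun i => continuous_coord (i + 1)

theorem continuous_shift_iter (n : ℕ) : Continuous (shift^[n] : MarkovShift A → MarkovShift A) :=
  continuous_shift.iterate n

theorem shift_coord (x : MarkovShift A) (i : ℕ) : (shift x).1 i = x.1 (i + 1) := rfl

theorem shift_iter_coord (x : MarkovShift A) (n i : ℕ) : (shift^[n] x).1 i = x.1 (n + i) := by
  induction n generalizing x with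
  | zero => simp
  | succ n ih => rw [Function.iterate_succ_apply, ih, shift_coord, show n + 1 + i = n + i + 1 by omega]

theorem ext_coord {x y : MarkovShift A} (h : ∀ i, x.1 i = y.1 i) : x = y :=
  Subtype.ext (funext h)

open Classical in
/-- Glue the first `n` symbols of `z` in front of `x` (junk if impossible). -/
noncomputable def glue (z : MarkovShift A) (n : ℕ) (x : MarkovShift A) : MarkovShift A :=
  if h : x.1 0 = z.1 n then
    ⟨fun i => if i < n then z.1 i else x.1 (i - n), by
      intro i
      rcases lt_trichotomy (i + 1) n with hi | hi | hi
      · simpa [hi, show i < n by omega] using z.2 i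
      · simp only [show i < n by omega, if_true, show ¬ (i + 1 < n) by omega, if_false]
        rw [show i + 1 - n = 0 by omega, h, ← hi]; exact z.2 i
      · simp only [show ¬ i < n by omega, show ¬ (i + 1 < n) by omega, if_false]
        rw [show i + 1 - n = (i - n) + 1 by omega]; exact x.2 _⟩
  else x

theorem glue_coord_lt {z x : MarkovShift A} {n : ℕ} (h : x.1 0 = z.1 n) {i : ℕ} (hi : i < n) :
    (glue z n x).1 i = z.1 i := by
  simp [glue, h, hi]

theorem glue_coord_ge {z x : MarkovShift A} {n : ℕ} (h : x.1 0 = z.1 n) (i : ℕ) :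
    (glue z n x).1 (n + i) = x.1 i := by
  simp [glue, h]

theorem shift_glue {z x : MarkovShift A} {n : ℕ} (h : x.1 0 = z.1 n) :
    shift^[n] (glue z n x) = x :=
  ext_coord fun i => by rw [shift_iter_coord, glue_coord_ge h]

theorem eq_glue {z y : MarkovShift A} {n : ℕ} (h : ∀ i < n + 1, y.1 i = z.1 i) :
    y = glue z n (shift^[n] y) := by
  have h0 : (shift^[n] y).1 0 = z.1 n := by
    rw [shift_iter_coord]; exact h n (by omega)
  refine ext_coord fun i => ?_
  rcases lt_or_ge i n with hi | hi
  · rw [glue_coord_lt h0 hi, h i (by omega)]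
  · obtain ⟨j, rfl⟩ := Nat.exists_eq_add_of_le hi
    rw [glue_coord_ge h0, shift_iter_coord]

/-- prepend one symbol (junk if impossible). -/
noncomputable def cons (a : ℕ) (x : MarkovShift A) : MarkovShift A :=
  if h : A a (x.1 0) = true then
    ⟨fun i => Nat.casesOn i a (fun j => x.1 j), by
      intro i
      cases i with
      | zero => exact h
      | succ j => exact x.2 j⟩
  else x

theorem cons_zero {a : ℕ} {x : MarkovShift A} (h : A a (x.1 0) = true) :
    (cons a x).1 0 = a := by
  simp [cons, h]

theorem cons_succ {a : ℕ} {x : MarkovShift A} (h : A a (x.1 0) = true) (i : ℕ) :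
    (cons a x).1 (i + 1) = x.1 i := by
  simp [cons, h]

theorem shift_cons {a : ℕ} {x : MarkovShift A} (h : A a (x.1 0) = true) :
    shift (cons a x) = x := ext_coord fun i => cons_succ h i

theorem cons_shift (y : MarkovShift A) : cons (y.1 0) (shift y) = y := by
  have h : A (y.1 0) ((shift y).1 0) = true := y.2 0
  refine ext_coord fun i => ?_
  cases i with
  | zero => exact cons_zero h
  | succ j => rw [cons_succ h]; rfl

theorem isOpen_adm (a : ℕ) : IsClopen {x : MarkovShift A | A a (x.1 0) = true} := by
  have : Continuous fun x : MarkovShift A => A a (x.1 0) :=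
    (continuous_of_discreteTopology (f := fun b => A a b)).comp (continuous_coord 0)
  exact (isClopen_discrete {true}).preimage this

theorem continuous_cons (a : ℕ) : Continuous (cons a : MarkovShift A → MarkovShift A) := by
  classical
  rw [continuous_iff_continuousAt]
  intro x
  by_cases h : A a (x.1 0) = true
  · refine continuousOn_iff_continuous_domRestrict.2 ?_ |>.continuousAt
      ((isOpen_adm a).isOpen.mem_nhds (show x ∈ {x : MarkovShift A | A a (x.1 0) = true} from h))
    refine continuous_into fun i => ?_
    cases i with
    | zero =>
      have : (fun x : {x : MarkovShift A | A a (x.1 0) = true} => (cons a x.1).1 0)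
        = fun _ => a := funext fun x => cons_zero x.2
      simpa [Set.domRestrict_def, this] using continuous_const
    | succ j =>
      have : (fun x : {x : MarkovShift A | A a (x.1 0) = true} => (cons a x.1).1 (j + 1))
        = fun x => x.1.1 j := funext fun x => cons_succ x.2 j
      have h2 : Continuous fun x : {x : MarkovShift A | A a (x.1 0) = true} => x.1.1 j :=
        (continuous_coord j).comp continuous_subtype_val
      simpa [Set.domRestrict_def, this] using h2
  · have hx : {x : MarkovShift A | ¬ A a (x.1 0) = true} ∈ 𝓝 x :=
      (isOpen_adm a).compl.isOpen.mem_nhds h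
    refine (continuousAt_id (x := x)).congr ?_
    filter_upwards [hx] with y hy
    have hy' : ¬ A a (y.1 0) = true := hy
    simp [cons, hy']

theorem isClopen_cylOf (x : MarkovShift A) (m : ℕ) : IsClopen (cylOf x m) := by
  have : cylOf x m = ⋂ i ∈ Finset.range m, {y : MarkovShift A | y.1 i = x.1 i} := by
    ext y; simp [cylOf]
  rw [this]
  refine Set.Finite.isClopen_biInter (Finset.finite_toSet _) fun i _ => ?_
  exact (isClopen_discrete {x.1 i}).preimage (continuous_coord i)

theorem self_mem_cylOf (x : MarkovShift A) (m : ℕ) : x ∈ cylOf x m := fun _ _ => rfl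

theorem cylOf_anti (x : MarkovShift A) {m n : ℕ} (h : m ≤ n) : cylOf x n ⊆ cylOf x m :=
  fun _ hy i hi => hy i (by omega)

theorem cylOf_mem_nhds (x : MarkovShift A) (m : ℕ) : cylOf x m ∈ 𝓝 x :=
  (isClopen_cylOf x m).isOpen.mem_nhds (self_mem_cylOf x m)

theorem exists_cylOf_subset {x : MarkovShift A} {U : Set (MarkovShift A)} (hU : U ∈ 𝓝 x) :
    ∃ m, cylOf x m ⊆ U := by
  by_contra hcon
  push Not at hcon
  choose y hy hyU using fun m => Set.not_subset.1 (hcon m)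
  have : Tendsto y atTop (𝓝 x) := by
    refine tendsto_subtype_rng.2 (tendsto_pi_nhds.2 fun i => ?_)
    refine tendsto_const_nhds.congr' ?_
    filter_upwards [eventually_gt_atTop i] with m hm
    exact (hy m i hm).symm
  obtain ⟨m, hm⟩ := (this.eventually hU).exists
  exact hyU m hm

theorem cylinder_eq_cylOf {w : List ℕ} {y : MarkovShift A} (hy : y ∈ cylinder w) :
    cylinder w = cylOf y w.length := by
  ext z
  constructor
  · intro hz i hi
    rw [hz ⟨i, hi⟩, hy ⟨i, hi⟩]
  · intro hz i
    rw [hz i i.2, hy i]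

theorem continuous_of_mod {g : MarkovShift A → ℝ} {M : ℕ → ℝ} (hM : Tendsto M atTop (𝓝 0))
    (hg : ∀ k, 1 ≤ k → ∀ x y, (∀ i < 1 + k, x.1 i = y.1 i) → |g x - g y| ≤ M k) : Continuous g := by
  rw [continuous_iff_continuousAt]
  intro x
  rw [ContinuousAt, Metric.tendsto_nhds]
  intro ε hε
  obtain ⟨k, hk1, hk⟩ := ((eventually_ge_atTop 1).and (hM.eventually (gt_mem_nhds hε))).exists
  filter_upwards [cylOf_mem_nhds x (1 + k)] with y hy
  rw [Real.dist_eq]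
  exact (hg k hk1 y x hy).trans_lt hk

theorem isCompact_box (F : ℕ → Finset ℕ) : IsCompact {x : MarkovShift A | ∀ i, x.1 i ∈ F i} := by
  have hc := isClosed_adm A
  have h1 : IsCompact (Set.univ.pi fun i => (F i : Set ℕ)) :=
    isCompact_univ_pi fun i => (F i).finite_toSet.isCompact
  have := hc.isClosedEmbedding_subtypeVal.isCompact_preimage h1
  refine (congrArg IsCompact (Set.ext fun x => ?_)).mp this
  constructor
  · intro h i
    exact h i trivial
  · intro h i _
    exact h i

theorem chain_connect (F : Finset ℕ) (x : MarkovShift A) :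
    ∀ (w : List ℕ) (a : ℕ), (∀ c ∈ w, c ∈ F) →
      List.IsChain (fun u v => A u v = true) (a :: (w ++ [x.1 0])) →
      ∃ z : MarkovShift A, z.1 0 = a ∧ shift^[w.length + 1] z = x ∧
        ∀ i < w.length, z.1 (i + 1) ∈ F := by
  intro w
  induction w with
  | nil =>
    intro a _ hc
    have h : A a (x.1 0) = true := by simpa using hc
    exact ⟨cons a x, cons_zero h, by simpa using shift_cons h, by simp⟩
  | cons c w ih =>
    intro a hF hc
    rw [List.cons_append, List.isChain_cons_cons] at hc
    obtain ⟨z, hz0, hzx, hzF⟩ := ih c (fun d hd => hF d (by simp [hd])) hc.2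
    have h : A a (z.1 0) = true := by rw [hz0]; exact hc.1
    refine ⟨cons a z, cons_zero h, ?_, ?_⟩
    · rw [List.length_cons, Function.iterate_succ_apply, shift_cons h, hzx]
    · intro i hi
      rw [cons_succ h]
      cases i with
      | zero => rw [hz0]; exact hF c (by simp)
      | succ j => exact hzF j (by simpa using hi)

/-- Pointwise form of finite primitivity. -/
def BIP' (A : ℕ → ℕ → Bool) (K : ℕ) (F : Finset ℕ) : Prop :=
  ∀ y x : MarkovShift A, ∃ z : MarkovShift A, z.1 0 = y.1 0 ∧ shift^[K + 1] z = x ∧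
        ∀ i < K, z.1 (i + 1) ∈ F

theorem bip_of (h : FinitelyPrimitive A) : ∃ K F, BIP' A K F := by
  obtain ⟨K, F, h⟩ := h
  refine ⟨K, F, fun y x => ?_⟩
  obtain ⟨w, hw, hF, hc⟩ := h (y.1 0) (x.1 0) ⟨y, rfl⟩ ⟨x, rfl⟩
  subst hw
  exact chain_connect F x w _ hF hc

theorem BIP'.prefix {K : ℕ} {F : Finset ℕ} (h : BIP' A K F) (y x : MarkovShift A) (n : ℕ) :
    ∃ z ∈ cylOf y (n + 1), shift^[K + 1 + n] z = x := by
  obtain ⟨z, hz0, hzx, -⟩ := h (shift^[n] y) x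
  have h0 : z.1 0 = y.1 n := by rw [hz0, shift_iter_coord]; rfl
  refine ⟨glue y n z, ?_, ?_⟩
  · intro i hi
    rcases Nat.lt_succ_iff_lt_or_eq.1 hi with hi | rfl
    · exact glue_coord_lt h0 hi
    · have := glue_coord_ge h0 0
      rw [add_zero] at this; rw [this, h0]
  · rw [Function.iterate_add_apply, shift_glue h0, hzx]

theorem birkhoff_succ (f : MarkovShift A → ℝ) (n : ℕ) (x : MarkovShift A) :
    birkhoff f (n + 1) x = f x + birkhoff f n (shift x) := by
  simp only [birkhoff, Finset.sum_range_succ', Function.iterate_succ_apply,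
    Function.iterate_zero, id]
  ring

theorem birkhoff_succ' (f : MarkovShift A → ℝ) (n : ℕ) (x : MarkovShift A) :
    birkhoff f (n + 1) x = birkhoff f n x + f (shift^[n] x) := by
  simp only [birkhoff, Finset.sum_range_succ]

theorem birkhoff_one (f : MarkovShift A → ℝ) (x : MarkovShift A) : birkhoff f 1 x = f x := by
  simp [birkhoff]

theorem birkhoff_zero (f : MarkovShift A → ℝ) (x : MarkovShift A) : birkhoff f 0 x = 0 := by
  simp [birkhoff]

end Helpers


section Helpers

variable {A : ℕ → ℕ → Bool}

/-- periodic point obtained from the first `n` symbols of `z`. -/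
def per (z : MarkovShift A) (n : ℕ) (hn : 0 < n) (h : z.1 n = z.1 0) : MarkovShift A :=
  ⟨fun i => z.1 (i % n), by
    intro i
    have hlt := Nat.mod_lt i hn
    change A (z.1 (i % n)) (z.1 ((i + 1) % n)) = true
    rcases Nat.lt_or_ge (i % n + 1) n with h1 | h1
    · have : (i + 1) % n = i % n + 1 := by
        rw [Nat.add_mod, Nat.mod_eq_of_lt (show 1 < n by omega), Nat.mod_eq_of_lt h1]
      rw [this]; exact z.2 _
    · have h2 : i % n + 1 = n := by omega
      have : (i + 1) % n = 0 := by
        rw [← Nat.mod_add_mod, h2, Nat.mod_self]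
      rw [this, ← h]
      have := z.2 (i % n)
      rwa [h2] at this⟩

theorem per_shift (z : MarkovShift A) (n : ℕ) (hn : 0 < n) (h : z.1 n = z.1 0) :
    shift^[n] (per z n hn h) = per z n hn h :=
  ext_coord fun i => by rw [shift_iter_coord]; simp [per]

/-- Quantitative control of a potential. -/
structure Ctrl (F : MarkovShift A → ℝ) (s : ℕ → ℝ) (C : ℝ) (M : ℕ → ℝ) : Prop where
  up : ∀ x, F x ≤ s (x.1 0)
  lo : ∀ x, s (x.1 0) - C ≤ F x
  summ : Summable fun a => Real.exp (s a)
  wal : ∀ n k, 1 ≤ k → ∀ x y : MarkovShift A, (∀ i < n + k, x.1 i = y.1 i) →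
    |birkhoff F n x - birkhoff F n y| ≤ M k
  cont : Continuous F

theorem walters_bound {f : MarkovShift A → ℝ} (hW : SatisfiesWalters f) (n k : ℕ) (hk : 1 ≤ k)
    (x y : MarkovShift A) (hxy : ∀ i < n + k, x.1 i = y.1 i) :
    |birkhoff f n x - birkhoff f n y| ≤ waltersSup f k := by
  have h1 : ∀ n, 1 ≤ n → ∀ x y : MarkovShift A, (∀ i < n + k, x.1 i = y.1 i) →
      |birkhoff f n x - birkhoff f n y| ≤ waltersSup f k := fun n hn x y hxy =>
    le_csSup (hW.1 k hk) ⟨n, hn, x, y, hxy, rfl⟩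
  rcases Nat.eq_zero_or_pos n with rfl | hn
  · have := h1 1 le_rfl x x (fun _ _ => rfl)
    simpa [birkhoff] using this
  · exact h1 n hn x y hxy

theorem walters_continuous {f : MarkovShift A → ℝ} (hW : SatisfiesWalters f) : Continuous f := by
  refine continuous_of_mod hW.2 fun k hk x y hxy => ?_
  simpa [birkhoff_one] using walters_bound hW 1 k hk x y hxy

set_option maxHeartbeats 400000 in
theorem exists_ctrl {K : ℕ} {Fs : Finset ℕ} (hbip : BIP' A K Fs) (f : MarkovShift A → ℝ)
    (hW : SatisfiesWalters f) (hVar1 : Var1Finite f) {p : ℝ} (hP : HasGurevichPressure f p)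
    (x₀ : MarkovShift A) :
    ∃ s C, Ctrl f s C (waltersSup f) := by
  classical
  obtain ⟨C1, hC1⟩ := hVar1
  have hv : ∀ x y : MarkovShift A, x.1 0 = y.1 0 → |f x - f y| ≤ C1 := by
    intro x y hxy
    refine hC1 ⟨x, y, ?_, by simp [birkhoff_one]⟩
    intro i hi
    obtain rfl : i = 0 := by omega
    exact hxy
  let ref : ℕ → ℝ := fun a => if h : Admissible A a then f h.choose else 0
  have href : ∀ x : MarkovShift A, |f x - ref (x.1 0)| ≤ C1 := by
    intro x
    have hadm : Admissible A (x.1 0) := ⟨x, rfl⟩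
    simp only [ref, hadm, dif_pos]
    exact hv _ _ hadm.choose_spec.symm
  let s : ℕ → ℝ := fun a => if Admissible A a then ref a + C1 else -(a : ℝ)
  have hs : ∀ x : MarkovShift A, s (x.1 0) = ref (x.1 0) + C1 := fun x => by
    have hadm : Admissible A (x.1 0) := ⟨x, rfl⟩
    simp [s, hadm]
  -- lower bound on the finite set
  obtain ⟨c, hc0, hc⟩ : ∃ c : ℝ, 0 ≤ c ∧ ∀ x : MarkovShift A, x.1 0 ∈ insert (x₀.1 0) Fs →
      -c ≤ f x := by
    refine ⟨∑ a ∈ insert (x₀.1 0) Fs, (|ref a| + |C1|), by positivity, fun x hx => ?_⟩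
    have h1 : |ref (x.1 0)| + |C1| ≤ ∑ a ∈ insert (x₀.1 0) Fs, (|ref a| + |C1|) :=
      Finset.single_le_sum (f := fun a => |ref a| + |C1|) (fun a _ => by positivity) hx
    have h2 := abs_le.1 (href x)
    have h3 := neg_abs_le (ref (x.1 0))
    have h4 := le_abs_self C1
    linarith [h2.1]
  obtain ⟨n, hn⟩ : ∃ n, n = 2 * K + 2 := ⟨_, rfl⟩
  -- the periodic points
  have hper : ∀ a, Admissible A a → ∃ x : MarkovShift A, (shift^[n] x = x ∧ x.1 0 = x₀.1 0) ∧
      x.1 (K + 1) = a ∧ ref a - C1 - n * c ≤ birkhoff f n x := by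
    rintro a ⟨y, hy⟩
    obtain ⟨z, hz0, hzs, hzF⟩ := hbip y x₀
    obtain ⟨z', hz'0, hz's, hz'F⟩ := hbip x₀ z
    have hz1 : ∀ i, z'.1 (K + 1 + i) = z.1 i := fun i => by
      rw [← hz's, shift_iter_coord]
    have hz2 : ∀ i, z'.1 (n + i) = x₀.1 i := fun i => by
      rw [← hzs, shift_iter_coord, ← hz1, hn,
        show K + 1 + (K + 1 + i) = 2 * K + 2 + i by omega]
    have hn0 : z'.1 n = z'.1 0 := by
      have := hz2 0
      rw [add_zero] at this
      rw [this, hz'0]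
    have hnpos : 0 < n := by omega
    set x := per z' n hnpos hn0 with hx
    have hxc : ∀ i < n, x.1 i = z'.1 i := fun i hi => by
      simp [hx, per, Nat.mod_eq_of_lt hi]
    have hxK : x.1 (K + 1) = a := by
      rw [hxc _ (by omega)]
      have := hz1 0
      rw [add_zero] at this
      rw [this, hz0, hy]
    refine ⟨x, ⟨per_shift _ _ _ _, ?_⟩, hxK, ?_⟩
    · rw [hxc 0 hnpos, hz'0]
    · have hlow : ∀ j ∈ (Finset.range n).erase (K + 1), -c ≤ f (shift^[j] x) := by
        intro j hj
        rw [Finset.mem_erase, Finset.mem_range] at hj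
        apply hc
        rw [shift_iter_coord, add_zero, hxc j hj.2]
        rcases Nat.lt_trichotomy j (K + 1) with h | h | h
        · rcases Nat.eq_zero_or_pos j with rfl | h0
          · rw [hz'0]; simp
          · have := hz'F (j - 1) (by omega)
            rw [show j - 1 + 1 = j by omega] at this
            simp [this]
        · exact absurd h hj.1
        · have := hzF (j - (K + 2)) (by omega)
          rw [← hz1, show K + 1 + (j - (K + 2) + 1) = j by omega] at this
          simp [this]
      have hsum := Finset.sum_le_sum hlow
      have hK : K + 1 ∈ Finset.range n := by simp [hn]; omega
      rw [Finset.sum_const, Finset.card_erase_of_mem hK, Finset.card_range, nsmul_eq_mul] at hsum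
      have hsplit := Finset.add_sum_erase (Finset.range n) (fun j => f (shift^[j] x)) hK
      have h2 := (abs_le.1 (href (shift^[K + 1] x))).1
      rw [shift_iter_coord, add_zero, hxK] at h2
      have hcast : ((n - 1 : ℕ) : ℝ) ≤ n := by exact_mod_cast Nat.sub_le _ _
      have : birkhoff f n x = ∑ j ∈ Finset.range n, f (shift^[j] x) := rfl
      rw [this, ← hsplit]
      have := mul_le_mul_of_nonneg_right hcast hc0
      linarith
  have : Nonempty (MarkovShift A) := ⟨x₀⟩
  choose! X hX hXK hXb using hper
  have hsumm : Summable fun a => Real.exp (s a) := by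
    have h1 : Summable fun a : {a // Admissible A a} => Real.exp (birkhoff f n (X a.1)) := by
      have := (hP (x₀.1 0) ⟨x₀, rfl⟩).1 n (by omega)
      let e : {a // Admissible A a} →
        {x : MarkovShift A // shift^[n] x = x ∧ x.1 0 = x₀.1 0} := fun a => ⟨X a.1, hX a.1 a.2⟩
      have he : Function.Injective e := by
        intro a b hab
        have : X a.1 = X b.1 := congrArg Subtype.val hab
        apply Subtype.ext
        rw [← hXK a.1 a.2, ← hXK b.1 b.2, this]
      have h0 := this.comp_injective he
      simp only [Function.comp_def] at h0
      exact h0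
    have h2 : Summable (Set.indicator {a | Admissible A a}
        (fun a => Real.exp (birkhoff f n (X a)))) := by
      rw [← summable_subtype_iff_indicator]
      exact h1
    have h3 := (h2.mul_left (Real.exp (2 * C1 + n * c))).add Real.summable_exp_neg_nat
    refine Summable.of_nonneg_of_le (fun a => (Real.exp_pos _).le) (fun a => ?_) h3
    by_cases ha : Admissible A a
    · have : a ∈ {a | Admissible A a} := ha
      rw [Set.indicator_of_mem this, ← Real.exp_add]
      have h4 : s a ≤ 2 * C1 + n * c + birkhoff f n (X a) := by
        have := hXb a ha
        simp only [s, ha, if_true]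
        linarith
      have := Real.exp_le_exp.2 h4
      have := Real.exp_pos (-(a : ℝ))
      linarith
    · have : a ∉ {a | Admissible A a} := ha
      rw [Set.indicator_of_notMem this]
      simp [s, ha]
  refine ⟨s, 2 * C1, ⟨fun x => ?_, fun x => ?_, hsumm, walters_bound hW, walters_continuous hW⟩⟩
  · rw [hs]; linarith [(abs_le.1 (href x)).2]
  · rw [hs]; linarith [(abs_le.1 (href x)).1]

/-- Scaling. -/
theorem Ctrl.scale {f : MarkovShift A → ℝ} {s C M} (h : Ctrl f s C M) {β : ℝ} (hβ : 1 < β)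
    : Ctrl (fun x => β * f x) (fun a => β * s a) (β * C) (fun k => β * M k) := by
  have hβ0 : 0 < β := by linarith
  refine ⟨fun x => mul_le_mul_of_nonneg_left (h.up x) hβ0.le, fun x => ?_, ?_, ?_,
    continuous_const.mul h.cont⟩
  · rw [← mul_sub]; exact mul_le_mul_of_nonneg_left (h.lo x) hβ0.le
  · have hev : ∀ᶠ a in cofinite, Real.exp (s a) < 1 :=
      h.summ.tendsto_cofinite_zero.eventually (gt_mem_nhds one_pos)
    refine Summable.of_norm_bounded_eventually h.summ ?_
    filter_upwards [hev] with a ha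
    rw [Real.norm_eq_abs, abs_of_pos (Real.exp_pos _)]
    apply Real.exp_le_exp.2
    have : s a < 0 := by simpa using ha
    nlinarith
  · intro n k hk x y hxy
    have h1 : ∀ x, birkhoff (fun x => β * f x) n x = β * birkhoff f n x := fun x => by
      simp [birkhoff, Finset.mul_sum]
    rw [h1, h1, ← mul_sub, abs_mul, abs_of_pos hβ0]
    exact mul_le_mul_of_nonneg_left (h.wal n k hk x y hxy) hβ0.le

end Helpers


section Helpers

variable {A : ℕ → ℕ → Bool}

theorem birkhoff_add (f : MarkovShift A → ℝ) (m n : ℕ) (x : MarkovShift A) :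
    birkhoff f (m + n) x = birkhoff f m x + birkhoff f n (shift^[m] x) := by
  simp only [birkhoff, Finset.sum_range_add]
  congr 1
  refine Finset.sum_congr rfl fun j _ => ?_
  rw [← Function.iterate_add_apply, add_comm]

/-- the `n`-th iterate of the transfer operator, with values in `[0,∞]`. -/
noncomputable def LL (F : MarkovShift A → ℝ) (n : ℕ) (u : MarkovShift A → ℝ≥0∞)
    (x : MarkovShift A) : ℝ≥0∞ :=
  ∑' y : {y : MarkovShift A // shift^[n] y = x},
    ENNReal.ofReal (Real.exp (birkhoff F n y.1)) * u y.1

theorem LL_mono (F : MarkovShift A → ℝ) (n : ℕ) {u v : MarkovShift A → ℝ≥0∞} (h : ∀ x, u x ≤ v x)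
    (x : MarkovShift A) : LL F n u x ≤ LL F n v x :=
  ENNReal.tsum_le_tsum fun y => by gcongr; exact h _

theorem LL_const_mul (F : MarkovShift A → ℝ) (n : ℕ) (u : MarkovShift A → ℝ≥0∞) (c : ℝ≥0∞)
    (x : MarkovShift A) : LL F n (fun y => c * u y) x = c * LL F n u x := by
  rw [LL, LL, ← ENNReal.tsum_mul_left]
  refine tsum_congr fun y => ?_
  ring

theorem tsum_fiber {X Y Z : Type*} (g : Y → Z) (k : X → Y) (z : Z) (G : X → ℝ≥0∞) :
    ∑' y : {y : X // g (k y) = z}, G y.1 =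
      ∑' w : {w : Y // g w = z}, ∑' y : {y : X // k y = w.1}, G y.1 := by
  let e : (Σ w : {w : Y // g w = z}, {y : X // k y = w.1}) ≃ {y : X // g (k y) = z} :=
    { toFun := fun p => ⟨p.2.1, by rw [p.2.2]; exact p.1.2⟩
      invFun := fun y => ⟨⟨k y.1, y.2⟩, ⟨y.1, rfl⟩⟩
      left_inv := by
        rintro ⟨⟨w, hw⟩, ⟨y, hy⟩⟩
        dsimp only at hy
        subst hy
        rfl
      right_inv := fun y => rfl }
  rw [← e.tsum_eq]
  exact ENNReal.tsum_sigma (fun (w : {w : Y // g w = z}) (y : {y : X // k y = w.1}) => G y.1)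

theorem LL_add (F : MarkovShift A → ℝ) (n m : ℕ) (u : MarkovShift A → ℝ≥0∞) (x : MarkovShift A) :
    LL F (n + m) u x = LL F n (LL F m u) x := by
  have h1 : LL F (n + m) u x = ∑' y : {y : MarkovShift A // shift^[n] (shift^[m] y) = x},
      ENNReal.ofReal (Real.exp (birkhoff F (m + n) y.1)) * u y.1 := by
    rw [add_comm m n, LL, Function.iterate_add]
    rfl
  rw [h1, tsum_fiber (shift^[n]) (shift^[m]) x
    (fun y => ENNReal.ofReal (Real.exp (birkhoff F (m + n) y)) * u y)]
  unfold LL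
  refine tsum_congr fun w => ?_
  rw [← ENNReal.tsum_mul_left]
  refine tsum_congr fun y => ?_
  rw [birkhoff_add, y.2, Real.exp_add, ENNReal.ofReal_mul (Real.exp_pos _).le]
  ring

theorem LL_one_eq (F : MarkovShift A → ℝ) (u : MarkovShift A → ℝ≥0∞) (x : MarkovShift A) :
    LL F 1 u x = ∑' a : ℕ, if A a (x.1 0) = true then
      ENNReal.ofReal (Real.exp (F (cons a x))) * u (cons a x) else 0 := by
  let e : {a : ℕ // A a (x.1 0) = true} ≃ {y : MarkovShift A // shift^[1] y = x} :=
    { toFun := fun a => ⟨cons a.1 x, shift_cons a.2⟩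
      invFun := fun y => ⟨y.1.1 0, by
        have h1 := y.1.2 0
        have h2 : shift y.1 = x := y.2
        have h3 : x.1 0 = y.1.1 1 := (congrArg (fun z => z.1 0) h2).symm
        rw [h3]; exact h1⟩
      left_inv := fun a => Subtype.ext (cons_zero a.2)
      right_inv := fun y => Subtype.ext (by
        have h2 : shift y.1 = x := y.2
        have := cons_shift y.1
        rw [h2] at this
        exact this) }
  rw [LL, ← e.tsum_eq]
  have := tsum_subtype {a : ℕ | A a (x.1 0) = true}
    (fun a => ENNReal.ofReal (Real.exp (F (cons a x))) * u (cons a x))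
  simp only [Set.indicator_apply] at this
  simp only [birkhoff_one]
  exact this

theorem measurable_LL_one {F : MarkovShift A → ℝ} (hF : Measurable F) {u : MarkovShift A → ℝ≥0∞}
    (hu : Measurable u) : Measurable (LL F 1 u) := by
  have : LL F 1 u = fun x => ∑' a : ℕ, if A a (x.1 0) = true then
      ENNReal.ofReal (Real.exp (F (cons a x))) * u (cons a x) else 0 :=
    funext fun x => LL_one_eq F u x
  rw [this]
  refine Measurable.tsum fun a => ?_
  refine Measurable.ite (isOpen_adm (A := A) a).isOpen.measurableSet ?_ measurable_const
  have hc := (continuous_cons (A := A) a).measurable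
  exact ((Real.measurable_exp.comp (hF.comp hc)).ennreal_ofReal).mul (hu.comp hc)

theorem LL_zero (F : MarkovShift A → ℝ) (u : MarkovShift A → ℝ≥0∞) (x : MarkovShift A) :
    LL F 0 u x = u x := by
  rw [LL, tsum_eq_single ⟨x, rfl⟩]
  · simp [birkhoff_zero]
  · rintro ⟨y, hy⟩ hne
    exact absurd (Subtype.ext hy) hne

theorem measurable_LL {F : MarkovShift A → ℝ} (hF : Measurable F) {u : MarkovShift A → ℝ≥0∞}
    (hu : Measurable u) (n : ℕ) : Measurable (LL F n u) := by
  induction n with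
  | zero => rwa [show LL F 0 u = u from funext fun x => LL_zero F u x]
  | succ n ih =>
    rw [add_comm, show LL F (1 + n) u = LL F 1 (LL F n u) from funext fun x => LL_add F 1 n u x]
    exact measurable_LL_one hF ih

theorem ruelle_eq (F u : MarkovShift A → ℝ) (hu : ∀ x, 0 ≤ u x) (x : MarkovShift A) :
    ruelle F u x = (LL F 1 (fun y => ENNReal.ofReal (u y)) x).toReal := by
  rw [LL, ENNReal.tsum_toReal_eq]
  · refine tsum_congr fun y => ?_
    rw [birkhoff_one, ENNReal.toReal_mul, ENNReal.toReal_ofReal (Real.exp_pos _).le,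
      ENNReal.toReal_ofReal (hu _)]
  · intro y
    exact ENNReal.mul_ne_top ENNReal.ofReal_ne_top ENNReal.ofReal_ne_top

theorem Ctrl.LL_one_le {F : MarkovShift A → ℝ} {s C M} (h : Ctrl F s C M) (x : MarkovShift A)
    {u : MarkovShift A → ℝ≥0∞} {c : ℝ≥0∞} (hu : ∀ x, u x ≤ c) :
    LL F 1 u x ≤ ENNReal.ofReal (∑' a, Real.exp (s a)) * c := by
  rw [LL_one_eq, ENNReal.ofReal_tsum_of_nonneg (fun a => (Real.exp_pos _).le) h.summ,
    ← ENNReal.tsum_mul_right]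
  refine ENNReal.tsum_le_tsum fun a => ?_
  split_ifs with ha
  · gcongr
    · have := h.up (cons a x)
      rwa [cons_zero ha] at this
    · exact hu _
  · exact zero_le

theorem Ctrl.LL_le {F : MarkovShift A → ℝ} {s C M} (h : Ctrl F s C M) (n : ℕ)
    {u : MarkovShift A → ℝ≥0∞} {c : ℝ≥0∞} (hu : ∀ x, u x ≤ c) (x : MarkovShift A) :
    LL F n u x ≤ ENNReal.ofReal (∑' a, Real.exp (s a)) ^ n * c := by
  induction n generalizing x with
  | zero => simpa [LL_zero] using hu x
  | succ n ih =>
    rw [add_comm, LL_add]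
    refine (h.LL_one_le x ih).trans (le_of_eq ?_)
    rw [pow_add, pow_one, mul_assoc]

/-- Conformality for all nonnegative measurable functions. -/
theorem conformal {F : MarkovShift A → ℝ} {s C M} (hF : Ctrl F s C M) {p : ℝ}
    {ν : Measure (MarkovShift A)} [IsProbabilityMeasure ν]
    (hν : ∀ g : MarkovShift A → ℝ, Continuous g → BoundedFun g →
      ∫ x, ruelle F g x ∂ν = Real.exp p * ∫ x, g x ∂ν)
    {u : MarkovShift A → ℝ≥0∞} (hu : Measurable u) :
    ∫⁻ x, LL F 1 u x ∂ν = ENNReal.ofReal (Real.exp p) * ∫⁻ x, u x ∂ν := by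
  classical
  have hFm := hF.cont.measurable
  let k : ℕ → MarkovShift A → ℝ≥0∞ := fun a x => if A a (x.1 0) = true then
      ENNReal.ofReal (Real.exp (F (cons a x))) else 0
  have hk : ∀ a, Measurable (k a) := fun a =>
    Measurable.ite (isOpen_adm (A := A) a).isOpen.measurableSet
      (Real.measurable_exp.comp (hFm.comp (continuous_cons a).measurable)).ennreal_ofReal
      measurable_const
  let ν2 : Measure (MarkovShift A) := Measure.sum fun a => (ν.withDensity (k a)).map (cons a)
  have hν2 : ∀ u : MarkovShift A → ℝ≥0∞, Measurable u →
      ∫⁻ x, u x ∂ν2 = ∫⁻ x, LL F 1 u x ∂ν := by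
    intro u hu
    have h1 : ∀ x, LL F 1 u x = ∑' a, k a x * u (cons a x) := fun x => by
      rw [LL_one_eq]
      refine tsum_congr fun a => ?_
      simp only [k]
      split_ifs <;> simp
    simp only [h1]
    rw [lintegral_tsum fun a => (show Measurable fun x => k a x * u (cons a x) from
        (hk a).mul (hu.comp (continuous_cons a).measurable)).aemeasurable,
      lintegral_sum_measure]
    refine tsum_congr fun a => ?_
    rw [lintegral_map hu (continuous_cons a).measurable]
    exact (lintegral_withDensity_eq_lintegral_mul _ (hk a)
      (hu.comp (continuous_cons a).measurable))
  have hfin2 : IsFiniteMeasure ν2 := by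
    constructor
    have h1 : ν2 Set.univ = ∫⁻ x, 1 ∂ν2 := by simp
    rw [h1, hν2 _ measurable_const]
    calc ∫⁻ x, LL F 1 (fun _ => 1) x ∂ν
        ≤ ∫⁻ x, ENNReal.ofReal (∑' a, Real.exp (s a)) * 1 ∂ν :=
          lintegral_mono fun x => hF.LL_one_le x (fun _ => le_rfl)
      _ < ⊤ := by simp
  have key : ν2 = ENNReal.ofReal (Real.exp p) • ν := by
    have hfin1 : IsFiniteMeasure (ENNReal.ofReal (Real.exp p) • ν) :=
      Measure.smul_finite _ ENNReal.ofReal_ne_top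
    refine ext_of_forall_lintegral_eq_of_IsFiniteMeasure fun g => ?_
    have hgm : Measurable fun x => (g x : ℝ≥0∞) := g.continuous.measurable.coe_nnreal_ennreal
    have hgb : ∀ x, (g x : ℝ≥0∞) ≤ (nndist g 0 : ℝ≥0∞) := fun x => by
      exact_mod_cast BoundedContinuousFunction.NNReal.upper_bound g x
    rw [hν2 _ hgm, lintegral_smul_measure, smul_eq_mul]
    have h1 := hν (fun x => (g x : ℝ)) (NNReal.continuous_coe.comp g.continuous)
      ⟨(nndist g 0 : ℝ), fun x => by
        rw [abs_of_nonneg (NNReal.coe_nonneg _)]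
        exact_mod_cast BoundedContinuousFunction.NNReal.upper_bound g x⟩
    have h2 : ∀ x, ruelle F (fun x => (g x : ℝ)) x = (LL F 1 (fun y => (g y : ℝ≥0∞)) x).toReal :=
      fun x => by
        rw [ruelle_eq _ _ (fun x => NNReal.coe_nonneg _)]
        simp
    have h3 : ∀ x, (g x : ℝ) = ((g x : ℝ≥0∞)).toReal := fun x => rfl
    have hLb : ∀ x, LL F 1 (fun y => (g y : ℝ≥0∞)) x < ⊤ := fun x =>
      (hF.LL_one_le x hgb).trans_lt (ENNReal.mul_lt_top ENNReal.ofReal_lt_top ENNReal.coe_lt_top)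
    simp only [h2] at h1
    simp only [h3] at h1
    rw [integral_toReal (measurable_LL_one hFm hgm).aemeasurable (ae_of_all _ hLb),
      integral_toReal hgm.aemeasurable (ae_of_all _ fun x => ENNReal.coe_lt_top)] at h1
    have hf1 : ∫⁻ x, LL F 1 (fun y => (g y : ℝ≥0∞)) x ∂ν ≠ ⊤ := by
      refine ((lintegral_mono fun x => hF.LL_one_le x hgb).trans_lt ?_).ne
      simp only [lintegral_const, measure_univ, mul_one]
      exact ENNReal.mul_lt_top ENNReal.ofReal_lt_top ENNReal.coe_lt_top
    have hf2 : ∫⁻ x, (g x : ℝ≥0∞) ∂ν ≠ ⊤ := by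
      refine ((lintegral_mono hgb).trans_lt ?_).ne
      simp only [lintegral_const, measure_univ, mul_one]
      exact ENNReal.coe_lt_top
    rw [← ENNReal.toReal_eq_toReal_iff' hf1 (ENNReal.mul_ne_top ENNReal.ofReal_ne_top hf2), h1,
      ENNReal.toReal_mul, ENNReal.toReal_ofReal (Real.exp_pos _).le]
  rw [← hν2 u hu, key, lintegral_smul_measure, smul_eq_mul]

theorem conformal_iter {F : MarkovShift A → ℝ} (hF : Measurable F) {c : ℝ≥0∞}
    {ν : Measure (MarkovShift A)}
    (hν : ∀ u : MarkovShift A → ℝ≥0∞, Measurable u →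
      ∫⁻ x, LL F 1 u x ∂ν = c * ∫⁻ x, u x ∂ν) (n : ℕ)
    {u : MarkovShift A → ℝ≥0∞} (hu : Measurable u) :
    ∫⁻ x, LL F n u x ∂ν = c ^ n * ∫⁻ x, u x ∂ν := by
  induction n with
  | zero => simp [LL_zero]
  | succ n ih =>
    have : ∀ x, LL F (n + 1) u x = LL F 1 (LL F n u) x := fun x => by rw [add_comm, LL_add]
    simp only [this]
    rw [hν _ (measurable_LL hF hu n), ih, pow_succ]
    ring

end Helpers


section Helpers

variable {A : ℕ → ℕ → Bool}

theorem Ctrl.LL_distort {F : MarkovShift A → ℝ} {s C M} (hF : Ctrl F s C M) (n k : ℕ) (hk : 1 ≤ k)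
    (x y : MarkovShift A) (hxy : ∀ i < k, x.1 i = y.1 i) :
    LL F n (fun _ => 1) x ≤ ENNReal.ofReal (Real.exp (M k)) * LL F n (fun _ => 1) y := by
  have h0 : ∀ z : {z : MarkovShift A // shift^[n] z = x}, y.1 0 = z.1.1 n := fun z => by
    have := congrArg (fun w => w.1 0) z.2
    simp only [shift_iter_coord] at this
    rw [show z.1.1 n = x.1 0 from this]
    exact (hxy 0 (by omega)).symm
  let e : {z : MarkovShift A // shift^[n] z = x} → {z : MarkovShift A // shift^[n] z = y} :=
    fun z => ⟨glue z.1 n y, shift_glue (h0 z)⟩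
  have hxi : ∀ (z : {z : MarkovShift A // shift^[n] z = x}) i, z.1.1 (n + i) = x.1 i := fun z i => by
    rw [← shift_iter_coord, z.2]
  have he : Function.Injective e := by
    intro z z' hzz
    have h1 : glue z.1 n y = glue z'.1 n y := congrArg Subtype.val hzz
    refine Subtype.ext (ext_coord fun i => ?_)
    rcases lt_or_ge i n with hi | hi
    · rw [← glue_coord_lt (h0 z) hi, ← glue_coord_lt (h0 z') hi, h1]
    · obtain ⟨j, rfl⟩ := Nat.exists_eq_add_of_le hi
      rw [hxi, hxi]
  simp only [LL, mul_one]
  calc ∑' z : {z : MarkovShift A // shift^[n] z = x}, ENNReal.ofReal (Real.exp (birkhoff F n z.1))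
      ≤ ∑' z : {z : MarkovShift A // shift^[n] z = x},
          ENNReal.ofReal (Real.exp (M k)) * ENNReal.ofReal (Real.exp (birkhoff F n (e z).1)) := by
        refine ENNReal.tsum_le_tsum fun z => ?_
        rw [← ENNReal.ofReal_mul (Real.exp_pos _).le, ← Real.exp_add]
        gcongr
        have := hF.wal n k hk z.1 (e z).1 (fun i hi => by
          rcases lt_or_ge i n with hi' | hi'
          · exact (glue_coord_lt (h0 z) hi').symm
          · obtain ⟨j, rfl⟩ := Nat.exists_eq_add_of_le hi'
            rw [hxi, glue_coord_ge (h0 z)]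
            exact hxy j (by omega))
        linarith [(abs_le.1 this).2]
    _ = ENNReal.ofReal (Real.exp (M k)) * ∑' z, ENNReal.ofReal (Real.exp (birkhoff F n (e z).1)) :=
        ENNReal.tsum_mul_left
    _ ≤ _ := by
        gcongr
        exact ENNReal.tsum_comp_le_tsum_of_injective he
          (fun z => ENNReal.ofReal (Real.exp (birkhoff F n z.1)))

theorem Ctrl.LL_bip1 {F : MarkovShift A → ℝ} {s C M} (hF : Ctrl F s C M) {K : ℕ} {Fs : Finset ℕ}
    (hb : BIP' A K Fs) {c : ℝ} (hc : ∀ x : MarkovShift A, x.1 0 ∈ Fs → -c ≤ F x)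
    {u : MarkovShift A → ℝ≥0∞} {B : ℝ}
    (hu : ∀ x y, x.1 0 = y.1 0 → u x ≤ ENNReal.ofReal (Real.exp B) * u y) (x y : MarkovShift A) :
    LL F 1 u x ≤ ENNReal.ofReal (Real.exp (C + K * c + B)) * LL F (K + 1) u y := by
  choose p hp0 hp1 hp2 using fun z => hb z y
  let e : {z : MarkovShift A // shift^[1] z = x} → {z : MarkovShift A // shift^[K + 1] z = y} :=
    fun z => ⟨p z.1, hp1 z.1⟩
  have he : Function.Injective e := by
    intro z z' hzz
    have h1 : p z.1 = p z'.1 := congrArg Subtype.val hzz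
    have h2 : z.1.1 0 = z'.1.1 0 := by rw [← hp0 z.1, ← hp0 z'.1, h1]
    have h3 : shift z.1 = shift z'.1 := z.2.trans z'.2.symm
    refine Subtype.ext ?_
    rw [← cons_shift z.1, ← cons_shift z'.1, h2, h3]
  calc LL F 1 u x ≤ ∑' z : {z : MarkovShift A // shift^[1] z = x},
        ENNReal.ofReal (Real.exp (C + K * c + B)) *
          (ENNReal.ofReal (Real.exp (birkhoff F (K + 1) (e z).1)) * u (e z).1) := by
        refine ENNReal.tsum_le_tsum fun z => ?_
        calc ENNReal.ofReal (Real.exp (birkhoff F 1 z.1)) * u z.1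
            ≤ ENNReal.ofReal (Real.exp (C + K * c + birkhoff F (K + 1) (e z).1)) *
              (ENNReal.ofReal (Real.exp B) * u (e z).1) := by
              gcongr
              · have h1 := hF.up z.1
                have h2 := hF.lo (p z.1)
                rw [hp0] at h2
                have h3 : -(K * c) ≤ birkhoff F K (shift (p z.1)) := by
                  have : ∑ j ∈ Finset.range K, (-c) ≤ birkhoff F K (shift (p z.1)) := by
                    refine Finset.sum_le_sum fun j hj => ?_
                    refine hc _ ?_
                    rw [shift_iter_coord, shift_coord]
                    exact hp2 z.1 j (Finset.mem_range.1 hj)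
                  simpa using this
                have h4 : birkhoff F (K + 1) (p z.1) = F (p z.1) + birkhoff F K (shift (p z.1)) := by
                  rw [add_comm, birkhoff_add, birkhoff_one]; rfl
                rw [birkhoff_one]
                change F z.1 ≤ C + K * c + birkhoff F (K + 1) (p z.1)
                rw [h4]
                linarith
              · exact hu _ _ (hp0 z.1).symm
          _ = _ := by
              rw [Real.exp_add (C + K * c) (birkhoff F (K + 1) (e z).1), Real.exp_add (C + K * c) B,
                ENNReal.ofReal_mul (Real.exp_pos _).le, ENNReal.ofReal_mul (Real.exp_pos _).le]
              ring
    _ = ENNReal.ofReal (Real.exp (C + K * c + B)) * ∑' z,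
          (ENNReal.ofReal (Real.exp (birkhoff F (K + 1) (e z).1)) * u (e z).1) :=
        ENNReal.tsum_mul_left
    _ ≤ _ := by
        gcongr
        exact ENNReal.tsum_comp_le_tsum_of_injective he
          (fun z => ENNReal.ofReal (Real.exp (birkhoff F (K + 1) z.1)) * u z.1)

/-- the BIP ratio constant -/
noncomputable def bipC (s : ℕ → ℝ) (C : ℝ) (K : ℕ) (c B : ℝ) : ℝ :=
  (∑' a, Real.exp (s a)) ^ K * Real.exp (C + K * c + B)

theorem Ctrl.LL_bip {F : MarkovShift A → ℝ} {s C M} (hF : Ctrl F s C M) {K : ℕ} {Fs : Finset ℕ}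
    (hb : BIP' A K Fs) {c : ℝ} (hc : ∀ x : MarkovShift A, x.1 0 ∈ Fs → -c ≤ F x)
    {u : MarkovShift A → ℝ≥0∞} {B : ℝ}
    (hu : ∀ x y, x.1 0 = y.1 0 → u x ≤ ENNReal.ofReal (Real.exp B) * u y) (x y : MarkovShift A) :
    LL F (K + 1) u x ≤ ENNReal.ofReal (bipC s C K c B) * LL F (K + 1) u y := by
  rw [LL_add]
  refine (hF.LL_le K (fun z => hF.LL_bip1 hb hc hu z y) x).trans (le_of_eq ?_)
  rw [bipC, ENNReal.ofReal_mul (by positivity), ENNReal.ofReal_pow (by positivity), mul_assoc]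

theorem LL_liminf (F : MarkovShift A → ℝ) (b : ℕ → MarkovShift A → ℝ≥0∞) (x : MarkovShift A) :
    LL F 1 (fun y => liminf (fun j => b j y) atTop) x ≤ liminf (fun j => LL F 1 (b j) x) atTop := by
  let _ : MeasurableSpace {y : MarkovShift A // shift^[1] y = x} := ⊤
  have hex : ∀ y, ENNReal.ofReal (Real.exp (birkhoff F 1 y)) ≠ 0 := fun y => by
    simp [Real.exp_pos]
  unfold LL
  simp only [← lintegral_count]
  refine le_trans (le_of_eq ?_) (lintegral_liminf_le fun j => measurable_from_top)
  refine lintegral_congr fun y => ?_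
  exact (ENNReal.liminf_const_mul_of_ne_zero_of_ne_top (hex _) ENNReal.ofReal_ne_top).symm

theorem le_of_lintegral_le {ν : Measure (MarkovShift A)} [IsProbabilityMeasure ν]
    {u : MarkovShift A → ℝ≥0∞} {c : ℝ≥0∞} (h : ∀ x, c ≤ u x) : c ≤ ∫⁻ x, u x ∂ν := by
  calc c = ∫⁻ _, c ∂ν := by simp
    _ ≤ _ := lintegral_mono h

theorem lintegral_le_of_le {ν : Measure (MarkovShift A)} [IsProbabilityMeasure ν]
    {u : MarkovShift A → ℝ≥0∞} {c : ℝ≥0∞} (h : ∀ x, u x ≤ c) : ∫⁻ x, u x ∂ν ≤ c := by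
  calc _ ≤ ∫⁻ _, c ∂ν := lintegral_mono h
    _ = c := by simp

/-- existence of the reference super-eigenfunction `h'`. -/
theorem exists_href {F : MarkovShift A → ℝ} {s C M} (hF : Ctrl F s C M) {K : ℕ} {Fs : Finset ℕ}
    (hb : BIP' A K Fs) {c : ℝ} (hc : ∀ x : MarkovShift A, x.1 0 ∈ Fs → -c ≤ F x)
    {lam : ℝ≥0∞} (hl0 : lam ≠ 0) (hlt : lam ≠ ⊤)
    {ν : Measure (MarkovShift A)} [IsProbabilityMeasure ν]
    (hν : ∀ u : MarkovShift A → ℝ≥0∞, Measurable u →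
      ∫⁻ x, LL F 1 u x ∂ν = lam * ∫⁻ x, u x ∂ν) :
    ∃ g : MarkovShift A → ℝ≥0∞,
      (∀ x, g x ≤ ENNReal.ofReal (bipC s C K c (M 1))) ∧
      (∀ x, 1 ≤ ENNReal.ofReal (bipC s C K c (M 1)) * g x) ∧
      (∀ x y, g x ≤ ENNReal.ofReal (bipC s C K c (M 1)) * g y) ∧
      (∀ k, 1 ≤ k → ∀ x y : MarkovShift A, (∀ i < k, x.1 i = y.1 i) →
        g x ≤ ENNReal.ofReal (Real.exp (M k)) * g y) ∧
      (∀ x, LL F 1 g x ≤ lam * g x) := by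
  set D := ENNReal.ofReal (bipC s C K c (M 1)) with hD
  let b : ℕ → MarkovShift A → ℝ≥0∞ := fun j x => (lam ^ (K + 1 + j))⁻¹ * LL F (K + 1 + j) (fun _ => 1) x
  have hmeas : ∀ n, Measurable (LL F n (fun _ => (1 : ℝ≥0∞))) := fun n =>
    measurable_LL hF.cont.measurable measurable_const n
  have hbD : ∀ j x y, b j x ≤ D * b j y := by
    intro j x y
    have h1 := hF.LL_bip hb hc (u := LL F j (fun _ => 1)) (B := M 1) (fun x y hxy =>
      hF.LL_distort j 1 le_rfl x y (fun i hi => by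
        obtain rfl : i = 0 := by omega
        exact hxy)) x y
    rw [← LL_add, ← LL_add] at h1
    simp only [b]
    rw [mul_left_comm]
    gcongr
  have hbk : ∀ j k, 1 ≤ k → ∀ x y : MarkovShift A, (∀ i < k, x.1 i = y.1 i) →
      b j x ≤ ENNReal.ofReal (Real.exp (M k)) * b j y := by
    intro j k hk x y hxy
    simp only [b]
    rw [mul_left_comm]
    gcongr
    exact hF.LL_distort _ k hk x y hxy
  have hbint : ∀ j, ∫⁻ x, b j x ∂ν = 1 := by
    intro j
    simp only [b]
    rw [lintegral_const_mul _ (hmeas _), conformal_iter hF.cont.measurable hν _ measurable_const]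
    simp only [lintegral_const, measure_univ, mul_one]
    exact ENNReal.inv_mul_cancel (pow_ne_zero _ hl0) (ENNReal.pow_ne_top hlt)
  have hbm : ∀ j, Measurable (b j) := fun j => (hmeas _).const_mul _
  have hb1 : ∀ j x, b j x ≤ D := fun j x => by
    have := le_of_lintegral_le (ν := ν) (hbD j x)
    rwa [lintegral_const_mul _ (hbm j), hbint, mul_one] at this
  have hb2 : ∀ j x, 1 ≤ D * b j x := fun j x => by
    have := lintegral_le_of_le (ν := ν) (fun y => hbD j y x)
    rwa [hbint] at this
  have hD0 : D ≠ 0 := by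
    intro h0
    obtain ⟨x⟩ : Nonempty (MarkovShift A) := by
      by_contra hne
      have := not_nonempty_iff.1 hne
      have h2 := measure_univ (μ := ν)
      rw [Set.eq_empty_of_isEmpty Set.univ] at h2
      simp at h2
    have := hb2 0 x
    simp [h0] at this
  have hDt : D ≠ ⊤ := ENNReal.ofReal_ne_top
  have hcm : ∀ (d : ℝ≥0∞) (_ : d ≠ 0) (_ : d ≠ ⊤) y,
      liminf (fun j => d * b j y) atTop = d * liminf (fun j => b j y) atTop := fun d h0 ht y =>
    ENNReal.liminf_const_mul_of_ne_zero_of_ne_top h0 ht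
  refine ⟨fun x => liminf (fun j => b j x) atTop, ?_, ?_, ?_, ?_, ?_⟩
  · intro x
    exact (liminf_le_liminf (Eventually.of_forall fun j => hb1 j x)).trans (by simp)
  · intro x
    rw [← hcm D hD0 hDt]
    exact le_trans (by simp) (liminf_le_liminf (Eventually.of_forall fun j => hb2 j x))
  · intro x y
    rw [← hcm D hD0 hDt]
    exact (liminf_le_liminf (Eventually.of_forall fun j => hbD j x y))
  · intro k hk x y hxy
    rw [← hcm _ (by simp [Real.exp_pos]) ENNReal.ofReal_ne_top]
    exact (liminf_le_liminf (Eventually.of_forall fun j => hbk j k hk x y hxy))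
  · intro x
    refine (LL_liminf F b x).trans ?_
    have h1 : ∀ j, LL F 1 (b j) x = lam * b (j + 1) x := by
      intro j
      simp only [b]
      rw [LL_const_mul, ← LL_add, show K + 1 + (j + 1) = 1 + (K + 1 + j) by omega, ← mul_assoc]
      congr 1
      rw [pow_add lam 1, pow_one, ENNReal.mul_inv (Or.inl hl0) (Or.inl hlt), ← mul_assoc,
        ENNReal.mul_inv_cancel hl0 hlt, one_mul]
    simp only [h1]
    rw [← hcm lam hl0 hlt]
    exact le_of_eq (liminf_nat_add (fun j => lam * b j x) 1)

end Helpers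


section Helpers

variable {A : ℕ → ℕ → Bool}

theorem LL_eq_imp {F : MarkovShift A → ℝ} {u v : MarkovShift A → ℝ≥0∞} (huv : ∀ x, u x ≤ v x)
    {x : MarkovShift A} (hle : LL F 1 v x ≤ LL F 1 u x) (ht : LL F 1 u x ≠ ⊤) {z : MarkovShift A}
    (hz : shift z = x) : u z = v z := by
  by_contra hne
  have hlt : u z < v z := lt_of_le_of_ne (huv z) hne
  refine absurd hle (not_le.2 ?_)
  refine ENNReal.tsum_lt_tsum (i := ⟨z, hz⟩) ht (fun y => by gcongr; exact huv _) ?_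
  exact ENNReal.mul_lt_mul_right (by simp [Real.exp_pos]) ENNReal.ofReal_ne_top hlt

theorem openPos {F : MarkovShift A → ℝ} (hF : Measurable F) {K : ℕ} {Fs : Finset ℕ}
    (hb : BIP' A K Fs) {lam : ℝ≥0∞}
    {ν : Measure (MarkovShift A)} [IsProbabilityMeasure ν]
    (hν : ∀ u : MarkovShift A → ℝ≥0∞, Measurable u →
      ∫⁻ x, LL F 1 u x ∂ν = lam * ∫⁻ x, u x ∂ν) : ν.IsOpenPosMeasure := by
  constructor
  rintro U hU ⟨y, hy⟩ h0
  obtain ⟨m, hm⟩ := exists_cylOf_subset (hU.mem_nhds hy)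
  have hE : ν (cylOf y (m + 1)) = 0 :=
    measure_mono_null ((cylOf_anti y (by omega)).trans hm) h0
  have hEm : MeasurableSet (cylOf y (m + 1)) := (isClopen_cylOf y (m + 1)).isOpen.measurableSet
  have hum : Measurable ((cylOf y (m + 1)).indicator (1 : MarkovShift A → ℝ≥0∞)) :=
    measurable_one.indicator hEm
  have h1 := conformal_iter hF hν (K + 1 + m) hum
  rw [lintegral_indicator_one hEm, hE, mul_zero, lintegral_eq_zero_iff (measurable_LL hF hum _)] at h1
  obtain ⟨x, hx⟩ := h1.exists
  obtain ⟨z, hz, hzx⟩ := hb.prefix y x m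
  have h2 := ENNReal.tsum_eq_zero.1 hx ⟨z, hzx⟩
  simp [Set.indicator_of_mem hz] at h2
  exact absurd h2 (not_le.2 (Real.exp_pos _))

theorem Ctrl.M_nonneg {F : MarkovShift A → ℝ} {s C M} (hF : Ctrl F s C M) (x : MarkovShift A)
    {k : ℕ} (hk : 1 ≤ k) : 0 ≤ M k :=
  (abs_nonneg _).trans (hF.wal 0 k hk x x fun _ _ => rfl)

/-- continuity of the transfer operator image of bounded continuous functions -/
theorem exists_cont_LL {F : MarkovShift A → ℝ} {s C M} (hF : Ctrl F s C M)
    {w : MarkovShift A → ℝ} (hw : Continuous w) (hw0 : ∀ x, 0 ≤ w x) {B : ℝ} (hB : ∀ x, w x ≤ B) :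
    ∃ T : MarkovShift A → ℝ, Continuous T ∧ (∀ x, 0 ≤ T x) ∧
      ∀ x, LL F 1 (fun y => ENNReal.ofReal (w y)) x = ENNReal.ofReal (T x) := by
  let t : ℕ → MarkovShift A → ℝ := fun a x => if A a (x.1 0) = true then
      Real.exp (F (cons a x)) * w (cons a x) else 0
  have ht0 : ∀ a x, 0 ≤ t a x := fun a x => by
    simp only [t]
    split_ifs
    · exact mul_nonneg (Real.exp_pos _).le (hw0 _)
    · exact le_rfl
  have htB : ∀ a x, t a x ≤ Real.exp (s a) * |B| := fun a x => by
    simp only [t]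
    split_ifs with ha
    · have := hF.up (cons a x)
      rw [cons_zero ha] at this
      exact mul_le_mul (Real.exp_le_exp.2 this) ((hB _).trans (le_abs_self B)) (hw0 _)
        (Real.exp_pos _).le
    · positivity
  have hsum : Summable fun a => Real.exp (s a) * |B| := hF.summ.mul_right _
  refine ⟨fun x => ∑' a, t a x, ?_, fun x => tsum_nonneg fun a => ht0 a x, ?_⟩
  · refine continuous_tsum (fun a => ?_) hsum (fun a x => ?_)
    · refine Continuous.if ?_ ?_ continuous_const
      · intro x hx
        rw [(isOpen_adm a).frontier_eq] at hx
        exact absurd hx (Set.notMem_empty _)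
      · exact (Real.continuous_exp.comp (hF.cont.comp (continuous_cons a))).mul
          (hw.comp (continuous_cons a))
    · rw [Real.norm_of_nonneg (ht0 a x)]
      exact htB a x
  · intro x
    rw [ENNReal.ofReal_tsum_of_nonneg (fun a => ht0 a x)
      (Summable.of_nonneg_of_le (fun a => ht0 a x) (fun a => htB a x) hsum), LL_one_eq]
    refine tsum_congr fun a => ?_
    simp only [t]
    split_ifs
    · rw [ENNReal.ofReal_mul (Real.exp_pos _).le]
    · simp

theorem eigen_LL {F : MarkovShift A → ℝ} {p : ℝ} {h : MarkovShift A → ℝ} (hpos : ∀ x, 0 < h x)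
    (hr : ∀ x, ruelle F h x = Real.exp p * h x) (x : MarkovShift A) :
    LL F 1 (fun y => ENNReal.ofReal (h y)) x = ENNReal.ofReal (Real.exp p) * ENNReal.ofReal (h x) := by
  have h1 := hr x
  rw [ruelle_eq F h (fun x => (hpos x).le)] at h1
  have h2 : 0 < Real.exp p * h x := mul_pos (Real.exp_pos _) (hpos x)
  rw [← ENNReal.ofReal_mul (Real.exp_pos _).le, ← h1, ENNReal.ofReal_toReal]
  intro ht
  rw [ht, ENNReal.toReal_top] at h1
  linarith

set_option maxHeartbeats 400000 in
theorem rpf_bounds {F : MarkovShift A → ℝ} {s C M} (hF : Ctrl F s C M) {K : ℕ} {Fs : Finset ℕ}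
    (hb : BIP' A K Fs) {c : ℝ} (hc : ∀ x : MarkovShift A, x.1 0 ∈ Fs → -c ≤ F x)
    (hM : Tendsto M atTop (𝓝 0)) {p : ℝ} {h : MarkovShift A → ℝ} {ν : Measure (MarkovShift A)}
    (hR : IsRPF F p h ν) :
    (∀ x y, h x ≤ bipC s C K c (M 1) * h y) ∧
    (∀ k, 1 ≤ k → ∀ x y : MarkovShift A, (∀ i < k, x.1 i = y.1 i) →
        h x ≤ Real.exp (M k) * h y) := by
  obtain ⟨hcont, hpos, hr, hprob, hintg, -⟩ := hR
  have hν : ∀ u : MarkovShift A → ℝ≥0∞, Measurable u →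
      ∫⁻ x, LL F 1 u x ∂ν = ENNReal.ofReal (Real.exp p) * ∫⁻ x, u x ∂ν :=
    fun u hu => conformal hF hintg hu
  have hl0 : ENNReal.ofReal (Real.exp p) ≠ 0 := by simp [Real.exp_pos]
  have hlt : ENNReal.ofReal (Real.exp p) ≠ ⊤ := ENNReal.ofReal_ne_top
  have hop : ν.IsOpenPosMeasure := openPos hF.cont.measurable hb hν
  obtain ⟨g, hg1, hg2, hg3, hg4, hg5⟩ := exists_href hF hb hc hl0 hlt hν
  set D := bipC s C K c (M 1) with hD
  have hD0 : 0 ≤ D := by rw [hD, bipC]; positivity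
  have hgt : ∀ x, g x ≠ ⊤ := fun x => ne_top_of_le_ne_top ENNReal.ofReal_ne_top (hg1 x)
  have hg0 : ∀ x, g x ≠ 0 := fun x h0 => by
    have := hg2 x
    simp [h0] at this
  let q : MarkovShift A → ℝ := fun x => (g x).toReal
  have hgq : ∀ x, g x = ENNReal.ofReal (q x) := fun x => (ENNReal.ofReal_toReal (hgt x)).symm
  have hq0 : ∀ x, 0 < q x := fun x => ENNReal.toReal_pos (hg0 x) (hgt x)
  have hqD : ∀ x, q x ≤ D := fun x => ENNReal.toReal_le_of_le_ofReal hD0 (hg1 x)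
  have hq3 : ∀ x y, q x ≤ D * q y := fun x y => by
    have := hg3 x y
    rw [hgq x, hgq y, ← ENNReal.ofReal_mul hD0] at this
    exact (ENNReal.ofReal_le_ofReal_iff (mul_nonneg hD0 (hq0 y).le)).1 this
  have hq4 : ∀ k, 1 ≤ k → ∀ x y : MarkovShift A, (∀ i < k, x.1 i = y.1 i) →
        q x ≤ Real.exp (M k) * q y := fun k hk x y hxy => by
    have := hg4 k hk x y hxy
    rw [hgq x, hgq y, ← ENNReal.ofReal_mul (Real.exp_pos _).le] at this
    exact (ENNReal.ofReal_le_ofReal_iff (mul_nonneg (Real.exp_pos _).le (hq0 y).le)).1 this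
  have hqc : Continuous q := by
    have hM' : Tendsto (fun k => (Real.exp (M k) - 1) * D) atTop (𝓝 0) := by
      have := (((Real.continuous_exp.tendsto 0).comp hM).sub_const 1).mul_const D
      simpa using this
    refine continuous_of_mod hM' fun k hk x y hxy => ?_
    have hMk : 1 ≤ Real.exp (M k) := Real.one_le_exp (hF.M_nonneg x hk)
    have h1 := hq4 k hk x y (fun i hi => hxy i (by omega))
    have h2 := hq4 k hk y x (fun i hi => (hxy i (by omega)).symm)
    have h3 : (Real.exp (M k) - 1) * q y ≤ (Real.exp (M k) - 1) * D :=
      mul_le_mul_of_nonneg_left (hqD y) (by linarith)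
    have h4 : (Real.exp (M k) - 1) * q x ≤ (Real.exp (M k) - 1) * D :=
      mul_le_mul_of_nonneg_left (hqD x) (by linarith)
    rw [abs_le]
    constructor <;> linarith
  suffices hmain : ∀ x0 y, h y = h x0 / q x0 * q y by
    constructor
    · intro x y
      have hc0 : 0 < h x / q x := div_pos (hpos x) (hq0 x)
      have := hq3 x y
      calc h x = h x / q x * q x := by field_simp [(hq0 x).ne']
        _ ≤ h x / q x * (D * q y) := mul_le_mul_of_nonneg_left this hc0.le
        _ = D * (h x / q x * q y) := by ring
        _ = _ := by rw [← hmain x y]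
    · intro k hk x y hxy
      have hc0 : 0 < h x / q x := div_pos (hpos x) (hq0 x)
      have := hq4 k hk x y hxy
      calc h x = h x / q x * q x := by field_simp [(hq0 x).ne']
        _ ≤ h x / q x * (Real.exp (M k) * q y) := mul_le_mul_of_nonneg_left this hc0.le
        _ = Real.exp (M k) * (h x / q x * q y) := by ring
        _ = _ := by rw [← hmain x y]
  intro x0
  set c0 := h x0 / q x0 with hc0
  have hc0p : 0 < c0 := div_pos (hpos x0) (hq0 x0)
  let w : MarkovShift A → ℝ := fun x => min (h x) (c0 * q x)
  have hw : Continuous w := hcont.min (continuous_const.mul hqc)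
  have hwp : ∀ x, 0 ≤ w x := fun x => le_min (hpos x).le (mul_pos hc0p (hq0 x)).le
  have hwB : ∀ x, w x ≤ c0 * D := fun x =>
    (min_le_right _ _).trans (mul_le_mul_of_nonneg_left (hqD x) hc0p.le)
  obtain ⟨T, hTc, hT0, hT⟩ := exists_cont_LL hF hw hwp hwB
  have hW1 : ∀ x, ENNReal.ofReal (w x) ≤ ENNReal.ofReal (h x) := fun x =>
    ENNReal.ofReal_le_ofReal (min_le_left _ _)
  have hW2 : ∀ x, ENNReal.ofReal (w x) ≤ ENNReal.ofReal c0 * g x := fun x => by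
    rw [hgq, ← ENNReal.ofReal_mul hc0p.le]
    exact ENNReal.ofReal_le_ofReal (min_le_right _ _)
  have hle : ∀ x, T x ≤ Real.exp p * w x := by
    intro x
    have h1 := LL_mono F 1 hW1 x
    have h2 := LL_mono F 1 hW2 x
    rw [LL_const_mul] at h2
    rw [eigen_LL hpos hr, hT, ← ENNReal.ofReal_mul (Real.exp_pos _).le,
      ENNReal.ofReal_le_ofReal_iff (mul_pos (Real.exp_pos _) (hpos x)).le] at h1
    have h3 := h2.trans (mul_le_mul_right (hg5 x) _)
    rw [hT, hgq, ← ENNReal.ofReal_mul (Real.exp_pos _).le, ← ENNReal.ofReal_mul hc0p.le,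
      ENNReal.ofReal_le_ofReal_iff (mul_pos hc0p (mul_pos (Real.exp_pos _) (hq0 x))).le] at h3
    simp only [w]
    rcases min_choice (h x) (c0 * q x) with h4 | h4 <;> rw [h4] <;> linarith
  have hae : (fun x => ENNReal.ofReal (T x)) =ᵐ[ν] fun x => ENNReal.ofReal (Real.exp p * w x) := by
    have hwm : Measurable fun x => ENNReal.ofReal (w x) := hw.measurable.ennreal_ofReal
    have hintg : ∫⁻ x, ENNReal.ofReal (T x) ∂ν = ∫⁻ x, ENNReal.ofReal (Real.exp p * w x) ∂ν := by
      simp only [← hT, ENNReal.ofReal_mul (Real.exp_pos p).le]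
      rw [hν _ hwm, lintegral_const_mul _ hwm]
    refine ae_eq_of_ae_le_of_lintegral_le
      (ae_of_all _ fun x => ENNReal.ofReal_le_ofReal (hle x)) ?_
      (hw.measurable.const_mul _).ennreal_ofReal.aemeasurable hintg.ge
    rw [hintg]
    refine ne_top_of_le_ne_top (ENNReal.ofReal_ne_top (r := Real.exp p * (c0 * D))) ?_
    exact lintegral_le_of_le fun x => ENNReal.ofReal_le_ofReal (by gcongr; exact hwB x)
  have heq : T = fun x => Real.exp p * w x := by
    refine (hTc.ae_eq_iff_eq ν (continuous_const.mul hw)).1 ?_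
    filter_upwards [hae] with x hx
    exact (ENNReal.ofReal_eq_ofReal_iff (hT0 x) (mul_nonneg (Real.exp_pos _).le (hwp x))).1 hx
  have hback : ∀ z, h (shift z) = c0 * q (shift z) → h z = c0 * q z := by
    intro z hz
    have hwz : w (shift z) = h (shift z) := by simp only [w]; rw [hz, min_self]
    have hLW : LL F 1 (fun y => ENNReal.ofReal (w y)) (shift z) =
        ENNReal.ofReal (Real.exp p) * ENNReal.ofReal (h (shift z)) := by
      rw [hT, heq, ← ENNReal.ofReal_mul (Real.exp_pos _).le, ← hwz]
    have hnt : LL F 1 (fun y => ENNReal.ofReal (w y)) (shift z) ≠ ⊤ := by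
      rw [hT]; exact ENNReal.ofReal_ne_top
    have h1 := LL_eq_imp hW1 (by rw [hLW, eigen_LL hpos hr]) hnt (z := z) rfl
    have h2 := LL_eq_imp hW2 (by
      rw [LL_const_mul, hLW, hz]
      refine (mul_le_mul_right (hg5 (shift z)) _).trans (le_of_eq ?_)
      rw [ENNReal.ofReal_mul hc0p.le, ← hgq]
      ring) hnt (z := z) rfl
    rw [hgq, ← ENNReal.ofReal_mul hc0p.le, h1] at h2
    exact (ENNReal.ofReal_eq_ofReal_iff (hpos z).le (mul_pos hc0p (hq0 z)).le).1 h2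
  have hback' : ∀ n z, h (shift^[n] z) = c0 * q (shift^[n] z) → h z = c0 * q z := by
    intro n
    induction n with
    | zero => exact fun z hz => hz
    | succ n ih =>
      intro z hz
      exact hback z (ih (shift z) hz)
  have hx0 : h x0 = c0 * q x0 := by rw [hc0]; field_simp [(hq0 x0).ne']
  have hcl : IsClosed {z | h z = c0 * q z} := isClosed_eq hcont (continuous_const.mul hqc)
  intro y
  have : y ∈ closure {z | h z = c0 * q z} := by
    rw [mem_closure_iff_nhds]
    intro U hU
    obtain ⟨m, hm⟩ := exists_cylOf_subset hU
    obtain ⟨z, hz, hzx⟩ := hb.prefix y x0 m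
    refine ⟨z, hm (cylOf_anti y (by omega) hz), ?_⟩
    refine hback' (K + 1 + m) z ?_
    rw [hzx]; exact hx0
  rw [hcl.closure_eq] at this
  exact this

end Helpers


section Helpers

variable {A : ℕ → ℕ → Bool}

theorem gibbs_prob {F : MarkovShift A → ℝ} {p : ℝ} {h : MarkovShift A → ℝ}
    {ν : Measure (MarkovShift A)} (hR : IsRPF F p h ν) : IsProbabilityMeasure (gibbs h ν) := by
  obtain ⟨hcont, hpos, hr, hprob, hintg, h1⟩ := hR
  constructor
  have hi : Integrable h ν := by
    by_contra hni
    rw [integral_undef hni] at h1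
    exact zero_ne_one h1
  rw [gibbs, withDensity_apply _ MeasurableSet.univ, Measure.restrict_univ,
    ← ofReal_integral_eq_lintegral_ofReal hi (ae_of_all _ fun x => (hpos x).le), h1,
    ENNReal.ofReal_one]

theorem lintegral_gibbs {h : MarkovShift A → ℝ} (hh : Continuous h) (ν : Measure (MarkovShift A))
    {u : MarkovShift A → ℝ≥0∞} (hu : Measurable u) :
    ∫⁻ x, u x ∂(gibbs h ν) = ∫⁻ x, ENNReal.ofReal (h x) * u x ∂ν :=
  lintegral_withDensity_eq_lintegral_mul _ hh.measurable.ennreal_ofReal hu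

theorem gibbs_conf {F : MarkovShift A → ℝ} {s C M} (hF : Ctrl F s C M) {p : ℝ}
    {h : MarkovShift A → ℝ} {ν : Measure (MarkovShift A)} (hR : IsRPF F p h ν) (n : ℕ)
    {u : MarkovShift A → ℝ≥0∞} (hu : Measurable u) :
    ∫⁻ x, LL F n (fun y => ENNReal.ofReal (h y) * u y) x ∂ν =
      ENNReal.ofReal (Real.exp p) ^ n * ∫⁻ x, u x ∂(gibbs h ν) := by
  have hh := hR.1
  have hprob := hR.2.2.2.1
  rw [lintegral_gibbs hh ν hu]
  exact conformal_iter hF.cont.measurable (fun u hu => conformal hF hR.2.2.2.2.1 hu) n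
    (hh.measurable.ennreal_ofReal.mul hu)

theorem gibbs_inv {F : MarkovShift A → ℝ} {s C M} (hF : Ctrl F s C M) {p : ℝ}
    {h : MarkovShift A → ℝ} {ν : Measure (MarkovShift A)} (hR : IsRPF F p h ν) :
    (gibbs h ν).map shift = gibbs h ν := by
  refine Measure.ext fun E hE => ?_
  have hsm := (continuous_shift (A := A)).measurable
  rw [Measure.map_apply hsm hE]
  have hum : Measurable (E.indicator (1 : MarkovShift A → ℝ≥0∞)) := measurable_one.indicator hE
  have hum' : Measurable ((shift ⁻¹' E).indicator (1 : MarkovShift A → ℝ≥0∞)) :=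
    measurable_one.indicator (hsm hE)
  rw [← lintegral_indicator_one hE, ← lintegral_indicator_one (hsm hE)]
  have h1 := gibbs_conf hF hR 1 hum'
  have h2 : ∀ x, LL F 1 (fun y => ENNReal.ofReal (h y) *
      (shift ⁻¹' E).indicator (1 : MarkovShift A → ℝ≥0∞) y) x =
      ENNReal.ofReal (Real.exp p) * (ENNReal.ofReal (h x) *
        E.indicator (1 : MarkovShift A → ℝ≥0∞) x) := by
    intro x
    rw [← mul_assoc, ← eigen_LL hR.2.1 hR.2.2.1, mul_comm, ← LL_const_mul]
    unfold LL
    refine tsum_congr fun y => ?_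
    have hy : shift y.1 = x := y.2
    have : (shift ⁻¹' E).indicator (1 : MarkovShift A → ℝ≥0∞) y.1 =
        E.indicator (1 : MarkovShift A → ℝ≥0∞) x :=
      congrArg (fun z => E.indicator (1 : MarkovShift A → ℝ≥0∞) z) hy
    beta_reduce
    rw [this]
    ring
  simp only [h2] at h1
  rw [lintegral_const_mul' _ _ ENNReal.ofReal_ne_top, ← lintegral_gibbs hR.1 ν hum,
    pow_one] at h1
  exact ((ENNReal.mul_right_inj (by simp [Real.exp_pos]) ENNReal.ofReal_ne_top).1 h1).symm

theorem gibbs_pos {F : MarkovShift A → ℝ} {s C M} (hF : Ctrl F s C M) {K : ℕ} {Fs : Finset ℕ}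
    (hb : BIP' A K Fs) {p : ℝ}
    {h : MarkovShift A → ℝ} {ν : Measure (MarkovShift A)} (hR : IsRPF F p h ν)
    (y : MarkovShift A) (n : ℕ) : 0 < (gibbs h ν).real (cylOf y n) := by
  have := gibbs_prob hR
  have hprob := hR.2.2.2.1
  have hE : MeasurableSet (cylOf y n) := (isClopen_cylOf y n).isOpen.measurableSet
  have hop : ν.IsOpenPosMeasure := openPos hF.cont.measurable hb
    (fun u hu => conformal hF hR.2.2.2.2.1 hu)
  refine ENNReal.toReal_pos ?_ (measure_ne_top _ _)
  intro h0
  rw [gibbs, withDensity_apply_eq_zero hR.1.measurable.ennreal_ofReal] at h0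
  have h1 : {x | ENNReal.ofReal (h x) ≠ 0} ∩ cylOf y n = cylOf y n := by
    ext x
    simp [hR.2.1 x]
  rw [h1] at h0
  exact (isClopen_cylOf y n).isOpen.measure_ne_zero ν ⟨y, self_mem_cylOf y n⟩ h0

theorem LL_cyl (F : MarkovShift A → ℝ) (n k : ℕ) (hk : 1 ≤ k) (y : MarkovShift A)
    (u : MarkovShift A → ℝ≥0∞) (x : MarkovShift A) :
    LL F n (fun z => u z * (cylOf y (n + k)).indicator (1 : MarkovShift A → ℝ≥0∞) z) x =
      (ENNReal.ofReal (Real.exp (birkhoff F n (glue y n x))) * u (glue y n x)) *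
        (cylOf (shift^[n] y) k).indicator (1 : MarkovShift A → ℝ≥0∞) x := by
  by_cases hx : x ∈ cylOf (shift^[n] y) k
  · have h0 : x.1 0 = y.1 n := by
      rw [hx 0 (by omega), shift_iter_coord]; rfl
    rw [Set.indicator_of_mem hx]
    unfold LL
    rw [tsum_eq_single ⟨glue y n x, shift_glue h0⟩]
    · have : glue y n x ∈ cylOf y (n + k) := by
        intro i hi
        rcases lt_or_ge i n with hi' | hi'
        · exact glue_coord_lt h0 hi'
        · obtain ⟨j, rfl⟩ := Nat.exists_eq_add_of_le hi'
          rw [glue_coord_ge h0, hx j (by omega), shift_iter_coord]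
      beta_reduce
      rw [Set.indicator_of_mem this]
      simp
    · rintro ⟨z, hz⟩ hne
      have : z ∉ cylOf y (n + k) := by
        intro hz'
        apply hne
        refine Subtype.ext ?_
        have := eq_glue (z := y) (y := z) (n := n) (fun i hi => hz' i (by omega))
        rw [hz] at this
        exact this
      simp [Set.indicator_of_notMem this]
  · rw [Set.indicator_of_notMem hx, mul_zero]
    refine ENNReal.tsum_eq_zero.2 ?_
    rintro ⟨z, hz⟩
    have : z ∉ cylOf y (n + k) := by
      intro hz'
      apply hx
      intro i hi
      rw [← hz, shift_iter_coord, shift_iter_coord]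
      exact hz' _ (by omega)
    simp [Set.indicator_of_notMem this]

theorem lintegral_mul_ind_le {ν μ : Measure (MarkovShift A)} {E : Set (MarkovShift A)}
    {h : MarkovShift A → ℝ} (hh : Continuous h) (hμ : μ = gibbs h ν)
    (hE : MeasurableSet E) (c : ℝ≥0∞) (hc : c ≠ ⊤) :
    ∫⁻ x, (c * ENNReal.ofReal (h x)) * E.indicator (1 : MarkovShift A → ℝ≥0∞) x ∂ν = c * μ E := by
  have hum : Measurable (E.indicator (1 : MarkovShift A → ℝ≥0∞)) := measurable_one.indicator hE
  simp only [mul_assoc]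
  rw [lintegral_const_mul' _ _ hc, ← lintegral_gibbs hh ν hum,
    lintegral_indicator_one hE, hμ]

/-- the cylinder formula -/
theorem gibbs_cyl {F : MarkovShift A → ℝ} {s C M} (hF : Ctrl F s C M) {p : ℝ}
    {h : MarkovShift A → ℝ} {ν : Measure (MarkovShift A)} (hR : IsRPF F p h ν)
    {k : ℕ} (hk : 1 ≤ k) (hd : ∀ x y : MarkovShift A, (∀ i < k, x.1 i = y.1 i) →
        h x ≤ Real.exp (M k) * h y) (y : MarkovShift A) (n : ℕ) :
    Real.exp p ^ n * (gibbs h ν).real (cylOf y (n + k)) ≤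
      Real.exp (3 * M k + birkhoff F n y) * (h y / h (shift^[n] y)) *
        (gibbs h ν).real (cylOf (shift^[n] y) k) ∧
    Real.exp (birkhoff F n y) * (h y / h (shift^[n] y)) *
        (gibbs h ν).real (cylOf (shift^[n] y) k) ≤
    Real.exp (3 * M k) * (Real.exp p ^ n * (gibbs h ν).real (cylOf y (n + k))) := by
  have := gibbs_prob hR
  have hh := hR.1
  have hpos := hR.2.1
  have hE : MeasurableSet (cylOf y (n + k)) := (isClopen_cylOf y (n + k)).isOpen.measurableSet
  have hE' : MeasurableSet (cylOf (shift^[n] y) k) :=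
    (isClopen_cylOf (shift^[n] y) k).isOpen.measurableSet
  have h1 := gibbs_conf hF hR n (u := (cylOf y (n + k)).indicator (1 : MarkovShift A → ℝ≥0∞))
    (measurable_one.indicator hE)
  rw [lintegral_indicator_one hE] at h1
  simp only [LL_cyl F n k hk y] at h1
  set r := h y / h (shift^[n] y) with hr
  have hr0 : 0 < r := div_pos (hpos _) (hpos _)
  have hry : r * h (shift^[n] y) = h y := by rw [hr]; field_simp [(hpos (shift^[n] y)).ne']
  have key : ∀ x ∈ cylOf (shift^[n] y) k,
      Real.exp (birkhoff F n (glue y n x)) * h (glue y n x) ≤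
        Real.exp (3 * M k + birkhoff F n y) * r * h x ∧
      Real.exp (birkhoff F n y) * r * h x ≤
        Real.exp (3 * M k) * (Real.exp (birkhoff F n (glue y n x)) * h (glue y n x)) := by
    intro x hx
    have h0 : x.1 0 = y.1 n := by
      rw [hx 0 (by omega), shift_iter_coord]; rfl
    have hz : ∀ i < n + k, (glue y n x).1 i = y.1 i := by
      intro i hi
      rcases lt_or_ge i n with hi' | hi'
      · exact glue_coord_lt h0 hi'
      · obtain ⟨j, rfl⟩ := Nat.exists_eq_add_of_le hi'
        rw [glue_coord_ge h0, hx j (by omega), shift_iter_coord]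
    have e1 := abs_le.1 (hF.wal n k hk _ _ hz)
    have a1 := hd (glue y n x) y (fun i hi => hz i (by omega))
    have a2 := hd y (glue y n x) (fun i hi => (hz i (by omega)).symm)
    have b1 := hd x (shift^[n] y) hx
    have b2 := hd (shift^[n] y) x (fun i hi => (hx i hi).symm)
    have e3 : Real.exp (3 * M k) = Real.exp (M k) * Real.exp (M k) * Real.exp (M k) := by
      rw [← Real.exp_add, ← Real.exp_add]; ring_nf
    set E := Real.exp (M k) with hEdef
    have hE0 : 0 < E := Real.exp_pos _
    have c1 : Real.exp (birkhoff F n (glue y n x)) ≤ E * Real.exp (birkhoff F n y) := by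
      rw [hEdef, ← Real.exp_add]; gcongr; linarith
    have c2 : Real.exp (birkhoff F n y) ≤ E * Real.exp (birkhoff F n (glue y n x)) := by
      rw [hEdef, ← Real.exp_add]; gcongr; linarith
    constructor
    · rw [Real.exp_add, e3]
      calc _ ≤ (E * Real.exp (birkhoff F n y)) * (E * h y) :=
            mul_le_mul c1 a1 (hpos _).le (by positivity)
        _ = (E * Real.exp (birkhoff F n y)) * (E * (r * h (shift^[n] y))) := by rw [hry]
        _ ≤ (E * Real.exp (birkhoff F n y)) * (E * (r * (E * h x))) := by gcongr
        _ = _ := by ring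
    · rw [e3]
      calc Real.exp (birkhoff F n y) * r * h x
          ≤ (E * Real.exp (birkhoff F n (glue y n x))) * r * (E * h (shift^[n] y)) :=
            mul_le_mul (mul_le_mul_of_nonneg_right c2 hr0.le) b1 (hpos _).le (by positivity)
        _ = (E * Real.exp (birkhoff F n (glue y n x))) * E * (r * h (shift^[n] y)) := by ring
        _ = (E * Real.exp (birkhoff F n (glue y n x))) * E * h y := by rw [hry]
        _ ≤ (E * Real.exp (birkhoff F n (glue y n x))) * E * (E * h (glue y n x)) := by gcongr
        _ = _ := by ring
  have hreal : ∀ E, (gibbs h ν) E = ENNReal.ofReal ((gibbs h ν).real E) := fun E =>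
    (ENNReal.ofReal_toReal (measure_ne_top _ _)).symm
  have hpw : ENNReal.ofReal (Real.exp p) ^ n = ENNReal.ofReal (Real.exp p ^ n) :=
    (ENNReal.ofReal_pow (Real.exp_pos _).le n).symm
  have hind : ∀ (u v : MarkovShift A → ℝ), (∀ x ∈ cylOf (shift^[n] y) k, u x ≤ v x) →
      ∀ x, ENNReal.ofReal (u x) * (cylOf (shift^[n] y) k).indicator (1 : MarkovShift A → ℝ≥0∞) x ≤
        ENNReal.ofReal (v x) * (cylOf (shift^[n] y) k).indicator (1 : MarkovShift A → ℝ≥0∞) x := by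
    intro u v huv x
    by_cases hx : x ∈ cylOf (shift^[n] y) k
    · gcongr; exact huv x hx
    · simp [Set.indicator_of_notMem hx]
  have nn : ∀ E, 0 ≤ (gibbs h ν).real E := fun E => measureReal_nonneg
  constructor
  · have h2 := lintegral_mono (μ := ν) (hind _ _ fun x hx => (key x hx).1)
    simp only [← ENNReal.ofReal_mul (Real.exp_pos _).le] at h1
    rw [h1, hreal, hpw, ← ENNReal.ofReal_mul (by positivity)] at h2
    have h3 := lintegral_mul_ind_le (ν := ν) hh rfl hE'
      (ENNReal.ofReal (Real.exp (3 * M k + birkhoff F n y) * r)) ENNReal.ofReal_ne_top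
    simp only [← ENNReal.ofReal_mul (mul_pos (Real.exp_pos (3 * M k + birkhoff F n y)) hr0).le] at h3
    rw [h3, hreal, ← ENNReal.ofReal_mul (by positivity)] at h2
    exact (ENNReal.ofReal_le_ofReal_iff (by have := nn (cylOf (shift^[n] y) k); positivity)).1 h2
  · have h2 := lintegral_mono (μ := ν) (hind _ _ fun x hx => (key x hx).2)
    have h3 := lintegral_mul_ind_le (ν := ν) hh rfl hE'
      (ENNReal.ofReal (Real.exp (birkhoff F n y) * r)) ENNReal.ofReal_ne_top
    simp only [← ENNReal.ofReal_mul (mul_pos (Real.exp_pos (birkhoff F n y)) hr0).le] at h3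
    rw [h3] at h2
    simp only [ENNReal.ofReal_mul (Real.exp_pos (3 * M k)).le] at h2
    simp only [mul_assoc (ENNReal.ofReal (Real.exp (3 * M k)))] at h2
    rw [lintegral_const_mul' _ _ ENNReal.ofReal_ne_top] at h2
    simp only [← ENNReal.ofReal_mul (Real.exp_pos _).le] at h1
    rw [h1, hreal, hreal, hpw, ← ENNReal.ofReal_mul (by positivity),
      ← ENNReal.ofReal_mul (by positivity), ← ENNReal.ofReal_mul (by positivity)] at h2
    exact (ENNReal.ofReal_le_ofReal_iff (by have := nn (cylOf y (n + k)); positivity)).1 h2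

/-- bound on the contribution of a set of first symbols -/
theorem LL_tail {F : MarkovShift A → ℝ} {s C M} (hF : Ctrl F s C M)
    {h : MarkovShift A → ℝ} {D : ℝ}
    (hD : ∀ x y, h x ≤ D * h y) (T : Set ℕ) (x : MarkovShift A) :
    LL F 1 (fun y => ENNReal.ofReal (h y) * {y : MarkovShift A | y.1 0 ∈ T}.indicator 1 y) x ≤
      ENNReal.ofReal ((∑' a, T.indicator (fun a => Real.exp (s a)) a) * D) * ENNReal.ofReal (h x) := by
  have hsum : Summable (T.indicator fun a => Real.exp (s a)) := hF.summ.indicator T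
  have hnn : ∀ a, 0 ≤ T.indicator (fun a => Real.exp (s a)) a :=
    fun a => Set.indicator_nonneg (fun a _ => (Real.exp_pos _).le) a
  rw [LL_one_eq, ENNReal.ofReal_mul (tsum_nonneg hnn), ENNReal.ofReal_tsum_of_nonneg hnn hsum,
    ← ENNReal.tsum_mul_right, ← ENNReal.tsum_mul_right]
  refine ENNReal.tsum_le_tsum fun a => ?_
  split_ifs with ha
  · by_cases haT : a ∈ T
    · have h1 : cons a x ∈ {y : MarkovShift A | y.1 0 ∈ T} := by
        rw [Set.mem_ofPred_eq, cons_zero ha]; exact haT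
      rw [Set.indicator_of_mem h1, Set.indicator_of_mem haT, Pi.one_apply, mul_one, mul_assoc]
      have h2 := hF.up (cons a x)
      rw [cons_zero ha] at h2
      have hD0 : 0 ≤ D ∨ h x ≤ 0 := by
        by_contra hcon
        push Not at hcon
        have := hD x x
        nlinarith [hcon.1, hcon.2]
      gcongr
      rcases hD0 with hD0 | hx0
      · rw [← ENNReal.ofReal_mul hD0]
        exact ENNReal.ofReal_le_ofReal (hD _ _)
      · have := hD x x
        by_cases hD1 : 0 ≤ D
        · rw [← ENNReal.ofReal_mul hD1]
          exact ENNReal.ofReal_le_ofReal (hD _ _)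
        · push Not at hD1
          have h3 := hD (cons a x) (cons a x)
          have h4 : h (cons a x) ≤ 0 := by
            by_contra h5
            push Not at h5
            nlinarith
          rw [ENNReal.ofReal_of_nonpos h4]
          exact zero_le
    · have h1 : cons a x ∉ {y : MarkovShift A | y.1 0 ∈ T} := by
        rw [Set.mem_ofPred_eq, cons_zero ha]; exact haT
      simp [Set.indicator_of_notMem h1]
  · exact zero_le

theorem gibbs_tail {F : MarkovShift A → ℝ} {s C M} (hF : Ctrl F s C M) {p : ℝ}
    {h : MarkovShift A → ℝ} {ν : Measure (MarkovShift A)} (hR : IsRPF F p h ν) {D : ℝ} (hD0 : 0 ≤ D)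
    (hD : ∀ x y, h x ≤ D * h y) (T : Set ℕ) :
    Real.exp p * (gibbs h ν).real {x | x.1 0 ∈ T} ≤
      (∑' a, T.indicator (fun a => Real.exp (s a)) a) * D := by
  have := gibbs_prob hR
  have hnn : ∀ a, 0 ≤ T.indicator (fun a => Real.exp (s a)) a :=
    fun a => Set.indicator_nonneg (fun a _ => (Real.exp_pos _).le) a
  have hE : MeasurableSet {x : MarkovShift A | x.1 0 ∈ T} :=
    (continuous_coord (A := A) 0).measurable (MeasurableSet.of_discrete (s := T))
  have h1 := gibbs_conf hF hR 1 (u := {x : MarkovShift A | x.1 0 ∈ T}.indicator 1)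
    (measurable_one.indicator hE)
  rw [lintegral_indicator_one hE, pow_one] at h1
  have h2 := lintegral_mono (μ := ν) (LL_tail hF hD T)
  rw [h1, lintegral_const_mul _ hR.1.measurable.ennreal_ofReal] at h2
  have h3 := lintegral_gibbs hR.1 ν (u := fun _ => 1) measurable_const
  simp only [lintegral_const, measure_univ, mul_one] at h3
  rw [← h3, mul_one, ← ENNReal.ofReal_toReal (measure_ne_top (gibbs h ν) _),
    ← ENNReal.ofReal_mul (Real.exp_pos _).le] at h2
  exact (ENNReal.ofReal_le_ofReal_iff (mul_nonneg (tsum_nonneg hnn) hD0)).1 h2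

theorem rpf_term_le {F : MarkovShift A → ℝ} {p : ℝ} {h : MarkovShift A → ℝ} (hpos : ∀ x, 0 < h x)
    (hr : ∀ x, ruelle F h x = Real.exp p * h x) (x : MarkovShift A) :
    Real.exp (F x) * h x ≤ Real.exp p * h (shift x) := by
  have h1 := eigen_LL hpos hr (shift x)
  have h2 := ENNReal.le_tsum (f := fun y : {y : MarkovShift A // shift^[1] y = shift x} =>
    ENNReal.ofReal (Real.exp (birkhoff F 1 y.1)) * ENNReal.ofReal (h y.1)) ⟨x, rfl⟩
  rw [show (∑' y : {y : MarkovShift A // shift^[1] y = shift x},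
    ENNReal.ofReal (Real.exp (birkhoff F 1 y.1)) * ENNReal.ofReal (h y.1)) = _ from h1] at h2
  simp only [birkhoff_one] at h2
  rw [← ENNReal.ofReal_mul (Real.exp_pos _).le, ← ENNReal.ofReal_mul (Real.exp_pos _).le] at h2
  exact (ENNReal.ofReal_le_ofReal_iff (mul_pos (Real.exp_pos _) (hpos _)).le).1 h2

open Classical in
/-- splitting of the eigen-equation into finitely many symbols and a tail -/
theorem rpf_split {F : MarkovShift A → ℝ} {s C M} (hF : Ctrl F s C M) {p : ℝ}
    {h : MarkovShift A → ℝ} (hpos : ∀ x, 0 < h x)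
    (hr : ∀ x, ruelle F h x = Real.exp p * h x) {D : ℝ} (hD0 : 0 ≤ D)
    (hD : ∀ x y, h x ≤ D * h y) (Fs : Finset ℕ) (y : MarkovShift A) :
    Real.exp p * h y ≤ (∑ a ∈ Fs, if A a (y.1 0) = true then
      Real.exp (F (cons a y)) * h (cons a y) else 0) +
      (∑' a, ((Fs : Set ℕ)ᶜ).indicator (fun a => Real.exp (s a)) a) * D * h y := by
  have h1 := eigen_LL hpos hr y
  have hnn : ∀ a, 0 ≤ ((Fs : Set ℕ)ᶜ).indicator (fun a => Real.exp (s a)) a :=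
    fun a => Set.indicator_nonneg (fun a _ => (Real.exp_pos _).le) a
  have ht0 : 0 ≤ ∑' a, ((Fs : Set ℕ)ᶜ).indicator (fun a => Real.exp (s a)) a := tsum_nonneg hnn
  have hs0 : ∀ a, 0 ≤ (if A a (y.1 0) = true then
      Real.exp (F (cons a y)) * h (cons a y) else 0) := fun a => by
    split_ifs
    · exact (mul_pos (Real.exp_pos _) (hpos _)).le
    · exact le_rfl
  have h2 := LL_tail hF hD ((Fs : Set ℕ)ᶜ) y
  have h3 : LL F 1 (fun y => ENNReal.ofReal (h y)) y ≤ (∑ a ∈ Fs, ENNReal.ofReal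
      (if A a (y.1 0) = true then Real.exp (F (cons a y)) * h (cons a y) else 0)) +
      LL F 1 (fun y => ENNReal.ofReal (h y) *
        {y : MarkovShift A | y.1 0 ∈ ((Fs : Set ℕ)ᶜ)}.indicator 1 y) y := by
    rw [LL_one_eq, LL_one_eq]
    have h4 : (∑ a ∈ Fs, ENNReal.ofReal
      (if A a (y.1 0) = true then Real.exp (F (cons a y)) * h (cons a y) else 0)) =
      ∑' a, if a ∈ Fs then ENNReal.ofReal
        (if A a (y.1 0) = true then Real.exp (F (cons a y)) * h (cons a y) else 0) else 0 := by
      rw [tsum_eq_sum (s := Fs)]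
      · refine Finset.sum_congr rfl fun a ha => ?_
        rw [if_pos ha]
      · intro a ha
        rw [if_neg ha]
    rw [h4, ← ENNReal.tsum_add]
    refine ENNReal.tsum_le_tsum fun a => ?_
    by_cases hadm : A a (y.1 0) = true
    · simp only [hadm, if_true]
      by_cases haF : a ∈ Fs
      · simp only [haF, if_true]
        rw [ENNReal.ofReal_mul (Real.exp_pos _).le]
        exact le_self_add
      · have : cons a y ∈ {y : MarkovShift A | y.1 0 ∈ ((Fs : Set ℕ)ᶜ)} := by
          rw [Set.mem_ofPred_eq, cons_zero hadm]; simpa using haF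
        rw [Set.indicator_of_mem this]
        simp [haF]
    · simp [hadm]
  rw [h1] at h3
  have h5 := h3.trans (add_le_add_right h2 _)
  rw [← ENNReal.ofReal_sum_of_nonneg (fun a _ => hs0 a), ← ENNReal.ofReal_mul (by positivity),
    ← ENNReal.ofReal_mul (by positivity),
    ← ENNReal.ofReal_add (Finset.sum_nonneg fun a _ => hs0 a)
      (by have := (hpos y).le; positivity)] at h5
  exact (ENNReal.ofReal_le_ofReal_iff (add_nonneg (Finset.sum_nonneg fun a _ => hs0 a)
      (by have := (hpos y).le; positivity))).1 h5

end Helpers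


section Helpers

variable {A : ℕ → ℕ → Bool}

open Classical in
/-- the package of facts on the family of Gibbs measures needed at zero temperature -/
structure ZT (f : MarkovShift A → ℝ) (s : ℕ → ℝ) (M : ℕ → ℝ) (D Q S1 : ℝ)
    (φ : ℝ → MarkovShift A → ℝ) (q : ℝ → ℝ) (μ : ℝ → Measure (MarkovShift A)) : Prop where
  up : ∀ x, f x ≤ s (x.1 0)
  summ : Summable fun a => Real.exp (s a)
  M0 : Tendsto M atTop (𝓝 0)
  cont : Continuous f
  osc : ∀ β, 1 < β → ∀ x y, φ β x - φ β y ≤ D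
  mod : ∀ β, 1 < β → ∀ k, 1 ≤ k → ∀ x y : MarkovShift A, (∀ i < k, x.1 i = y.1 i) →
    φ β x - φ β y ≤ M k
  sub : ∀ β, 1 < β → ∀ x, f x + φ β x - φ β (shift x) - q β ≤ 0
  qub : ∀ β, 1 < β → q β ≤ Q
  calib : ∀ β, 1 < β → ∀ (L : ℝ) (Fs : Finset ℕ), (∀ a, a ∉ Fs → s a ≤ -L) → ∀ y : MarkovShift A,
    1 ≤ (∑ a ∈ Fs, if A a (y.1 0) = true then
      Real.exp (β * (f (cons a y) + φ β (cons a y) - φ β y - q β)) else 0) +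
      Real.exp (β * (D - q β) - (β - 1) * L) * S1
  prob : ∀ β, 1 < β → IsProbabilityMeasure (μ β)
  inv : ∀ β, 1 < β → (μ β).map shift = μ β
  pos : ∀ β, 1 < β → ∀ y n, 0 < (μ β).real (cylOf y n)
  cyl : ∀ β, 1 < β → ∀ k, 1 ≤ k → ∀ y n,
    |Real.log ((μ β).real (cylOf y (n + k))) / β - (Real.log ((μ β).real (cylOf (shift^[n] y) k)) / β
      + (birkhoff f n y + φ β y - φ β (shift^[n] y) - n * q β))| ≤ 3 * M k
  tail : ∀ β, 1 < β → ∀ (L : ℝ) (Fs : Finset ℕ), (∀ a, a ∉ Fs → s a ≤ -L) →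
    (μ β).real {x | x.1 0 ∉ Fs} ≤ Real.exp (β * (D - q β) - (β - 1) * L) * S1

theorem birkhoff_mul (f : MarkovShift A → ℝ) (β : ℝ) (n : ℕ) (x : MarkovShift A) :
    birkhoff (fun x => β * f x) n x = β * birkhoff f n x := by
  simp only [birkhoff, Finset.mul_sum]

theorem exp_scale_le {s : ℕ → ℝ} (hs : Summable fun a => Real.exp (s a)) {β : ℝ} (hβ : 1 < β)
    {T : Set ℕ} {t : ℝ} (hT : ∀ a ∈ T, s a ≤ t) :
    ∑' a, T.indicator (fun a => Real.exp (β * s a)) a ≤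
      Real.exp ((β - 1) * t) * ∑' a, Real.exp (s a) := by
  rw [← tsum_mul_left]
  have hle : ∀ a, T.indicator (fun a => Real.exp (β * s a)) a ≤
      Real.exp ((β - 1) * t) * Real.exp (s a) := by
    intro a
    by_cases ha : a ∈ T
    · rw [Set.indicator_of_mem ha, ← Real.exp_add]
      gcongr
      nlinarith [hT a ha]
    · rw [Set.indicator_of_notMem ha]
      positivity
  have h2 := hs.mul_left (Real.exp ((β - 1) * t))
  exact Summable.tsum_le_tsum hle (Summable.of_nonneg_of_le
    (fun a => Set.indicator_nonneg (fun a _ => (Real.exp_pos _).le) a) hle h2) h2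

set_option maxHeartbeats 1000000 in
theorem exists_ZT (hbip : FinitelyPrimitive A) (f : MarkovShift A → ℝ)
    (hWalters : SatisfiesWalters f) (hVar1 : Var1Finite f) (P : ℝ → ℝ)
    (hPfin : HasGurevichPressure f (P 1)) (h : ℝ → MarkovShift A → ℝ)
    (ν : ℝ → Measure (MarkovShift A))
    (hRPF : ∀ β : ℝ, 1 < β → IsRPF (fun x => β * f x) (P β) (h β) (ν β)) (x₀ : MarkovShift A) :
    ∃ s D Q S1, ZT f s (waltersSup f) D Q S1 (fun β x => Real.log (h β x) / β) (fun β => P β / β)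
      (fun β => gibbs (h β) (ν β)) := by
  obtain ⟨K, Fs, hb⟩ := bip_of hbip
  obtain ⟨s, C, hC⟩ := exists_ctrl hb f hWalters hVar1 hPfin x₀
  set M := waltersSup f with hM
  set S1 := ∑' a, Real.exp (s a) with hS1
  have hS1p : 0 < S1 := hC.summ.tsum_pos (fun a => (Real.exp_pos _).le) 0 (Real.exp_pos _)
  have hsle : ∀ a, s a ≤ Real.log S1 := fun a => by
    rw [Real.le_log_iff_exp_le hS1p]
    exact hC.summ.le_tsum a (fun b _ => (Real.exp_pos _).le)
  set G := Real.log S1 with hG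
  have hGe : Real.exp G = S1 := Real.exp_log hS1p
  obtain ⟨c, hc⟩ : ∃ c, ∀ x : MarkovShift A, x.1 0 ∈ Fs → -c ≤ f x := by
    refine ⟨∑ a ∈ Fs, |s a| + C, fun x hx => ?_⟩
    have h1 := hC.lo x
    have h2 : |s (x.1 0)| ≤ ∑ a ∈ Fs, |s a| :=
      Finset.single_le_sum (f := fun a => |s a|) (fun a _ => abs_nonneg _) hx
    have h3 := neg_abs_le (s (x.1 0))
    linarith
  set D := K * G + (C + K * c + M 1) with hD
  have hscale : ∀ β, 1 < β → ∑' a, Real.exp (β * s a) ≤ Real.exp (β * G) := by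
    intro β hβ
    have := exp_scale_le hC.summ hβ (T := Set.univ) (t := G) (fun a _ => hsle a)
    simp only [Set.indicator_univ] at this
    rw [← hS1, ← hGe, ← Real.exp_add] at this
    refine this.trans (le_of_eq ?_)
    congr 1; ring
  have hbd : ∀ β, 1 < β → (∀ x y, h β x ≤ Real.exp (β * D) * h β y) ∧
    (∀ k, 1 ≤ k → ∀ x y : MarkovShift A, (∀ i < k, x.1 i = y.1 i) →
        h β x ≤ Real.exp (β * M k) * h β y) := by
    intro β hβ
    have h1 := rpf_bounds (hC.scale hβ) hb (c := β * c) (fun x hx => by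
      have := hc x hx
      nlinarith) (by simpa using hWalters.2.const_mul β) (hRPF β hβ)
    refine ⟨fun x y => (h1.1 x y).trans ?_, h1.2⟩
    have := (hRPF β hβ).2.1 y
    gcongr
    rw [bipC]
    calc (∑' a, Real.exp (β * s a)) ^ K * Real.exp (β * C + K * (β * c) + β * M 1)
        ≤ (Real.exp (β * G)) ^ K * Real.exp (β * C + K * (β * c) + β * M 1) := by
          gcongr
          exact hscale β hβ
      _ = _ := by
          rw [← Real.exp_nat_mul, ← Real.exp_add]
          congr 1
          rw [hD]; ring
  have hlogle : ∀ β, 1 < β → ∀ x y t, h β x ≤ Real.exp (β * t) * h β y →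
      Real.log (h β x) / β - Real.log (h β y) / β ≤ t := by
    intro β hβ x y t hxy
    have hx := (hRPF β hβ).2.1 x
    have hy := (hRPF β hβ).2.1 y
    have h1 := Real.log_le_log hx hxy
    rw [Real.log_mul (Real.exp_pos _).ne' hy.ne', Real.log_exp] at h1
    rw [← sub_div, div_le_iff₀ (by linarith)]
    linarith
  have hexpφ : ∀ β, 1 < β → ∀ x, Real.exp (β * (Real.log (h β x) / β)) = h β x := by
    intro β hβ x
    rw [mul_div_cancel₀ _ (by linarith : β ≠ 0), Real.exp_log ((hRPF β hβ).2.1 x)]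
  have hβP : ∀ β : ℝ, 1 < β → β * (P β / β) = P β := fun β hβ =>
    mul_div_cancel₀ _ (by linarith : β ≠ 0)
  have htl : ∀ β, 1 < β → ∀ (L : ℝ) (Fs : Finset ℕ), (∀ a, a ∉ Fs → s a ≤ -L) →
      (∑' a, ((Fs : Set ℕ)ᶜ).indicator (fun a => Real.exp (β * s a)) a) * Real.exp (β * D) ≤
      Real.exp (P β) * (Real.exp (β * (D - P β / β) - (β - 1) * L) * S1) := by
    intro β hβ L Fs hFs
    have h1 := exp_scale_le hC.summ hβ (T := (Fs : Set ℕ)ᶜ) (t := -L)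
      (fun a ha => hFs a (by simpa using ha))
    calc _ ≤ (Real.exp ((β - 1) * -L) * S1) * Real.exp (β * D) := by gcongr
      _ = _ := by
        rw [← mul_assoc (Real.exp (P β)), ← Real.exp_add, mul_right_comm, ← Real.exp_add]
        congr 2
        rw [mul_sub, hβP β hβ]
        ring
  refine ⟨s, D, G + D, S1, ?_⟩
  refine ⟨hC.up, hC.summ, hWalters.2, hC.cont, ?_, ?_, ?_, ?_, ?_, ?_, ?_, ?_, ?_, ?_⟩
  · intro β hβ x y
    exact hlogle β hβ x y D ((hbd β hβ).1 x y)
  · intro β hβ k hk x y hxy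
    exact hlogle β hβ x y (M k) ((hbd β hβ).2 k hk x y hxy)
  · intro β hβ x
    have h1 := rpf_term_le (hRPF β hβ).2.1 (hRPF β hβ).2.2.1 x
    rw [← hexpφ β hβ x, ← hexpφ β hβ (shift x), ← Real.exp_add, ← Real.exp_add,
      Real.exp_le_exp, ← hβP β hβ] at h1
    have h2 : β * (f x + Real.log (h β x) / β - Real.log (h β (shift x)) / β - P β / β) ≤ 0 := by
      linarith
    by_contra hcon
    push Not at hcon
    have : 0 < β := by linarith
    linarith [mul_pos this hcon]
  · intro β hβ
    have h1 := rpf_split (hC.scale hβ) (hRPF β hβ).2.1 (hRPF β hβ).2.2.1 (Real.exp_pos _).le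
      (hbd β hβ).1 ∅ x₀
    simp only [Finset.sum_empty, zero_add, Finset.coe_empty, Set.compl_empty,
      Set.indicator_univ] at h1
    have hx := (hRPF β hβ).2.1 x₀
    have h2 := le_of_mul_le_mul_right h1 hx
    have h3 : Real.exp (P β) ≤ Real.exp (β * G) * Real.exp (β * D) :=
      h2.trans (by gcongr; exact hscale β hβ)
    rw [← Real.exp_add, Real.exp_le_exp] at h3
    rw [div_le_iff₀ (by linarith)]
    linarith
  · intro β hβ L Fs hFs y
    have h1 := rpf_split (hC.scale hβ) (hRPF β hβ).2.1 (hRPF β hβ).2.2.1 (Real.exp_pos _).le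
      (hbd β hβ).1 Fs y
    have hy := (hRPF β hβ).2.1 y
    have h2 := mul_le_mul_of_nonneg_right (htl β hβ L Fs hFs) hy.le
    have hep : 0 < Real.exp (P β) * h β y := mul_pos (Real.exp_pos _) hy
    have h3 : (∑ a ∈ Fs, if A a (y.1 0) = true then
      Real.exp (β * f (cons a y)) * h β (cons a y) else 0) = (Real.exp (P β) * h β y) *
      ∑ a ∈ Fs, if A a (y.1 0) = true then
        Real.exp (β * (f (cons a y) + Real.log (h β (cons a y)) / β - Real.log (h β y) / β - P β / β))
        else 0 := by
      rw [Finset.mul_sum]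
      refine Finset.sum_congr rfl fun a _ => ?_
      split_ifs
      · nth_rw 1 [← hexpφ β hβ (cons a y)]
        nth_rw 1 [← hexpφ β hβ y]
        rw [← Real.exp_add, ← Real.exp_add, ← Real.exp_add]
        congr 1
        nth_rw 1 [← hβP β hβ]
        ring
      · simp
    rw [h3] at h1
    refine le_of_mul_le_mul_left ?_ hep
    rw [mul_add]
    calc _ = Real.exp (P β) * h β y := mul_one _
      _ ≤ _ := h1
      _ ≤ _ := by
        refine add_le_add le_rfl (h2.trans (le_of_eq ?_))
        ring
  · intro β hβ
    exact gibbs_prob (hRPF β hβ)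
  · intro β hβ
    exact gibbs_inv (hC.scale hβ) (hRPF β hβ)
  · intro β hβ y n
    exact gibbs_pos (hC.scale hβ) hb (hRPF β hβ) y n
  · intro β hβ k hk y n
    have h1 := gibbs_cyl (hC.scale hβ) (hRPF β hβ) hk ((hbd β hβ).2 k hk) y n
    have p1 := gibbs_pos (hC.scale hβ) hb (hRPF β hβ) y (n + k)
    have p2 := gibbs_pos (hC.scale hβ) hb (hRPF β hβ) (shift^[n] y) k
    have p3 := (hRPF β hβ).2.1 y
    have p4 := (hRPF β hβ).2.1 (shift^[n] y)
    simp only [birkhoff_mul] at h1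
    have hβ0 : 0 < β := by linarith
    have q1 := Real.log_le_log (by positivity) h1.1
    have q2 := Real.log_le_log (by positivity) h1.2
    rw [Real.log_mul (by positivity) p1.ne', Real.log_mul (by positivity) p2.ne',
      Real.log_mul (by positivity) (by positivity), Real.log_div p3.ne' p4.ne', Real.log_exp,
      Real.log_pow, Real.log_exp] at q1
    rw [Real.log_mul (by positivity) p2.ne',
      Real.log_mul (by positivity) (by positivity), Real.log_div p3.ne' p4.ne', Real.log_exp,
      Real.log_mul (by positivity) (by positivity), Real.log_exp,
      Real.log_mul (by positivity) p1.ne',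
      Real.log_pow, Real.log_exp] at q2
    have e : ∀ a b c d e : ℝ, a / β - (b / β + (c + d / β - e / β - n * (P β / β))) =
        (a - b - β * c - d + e + n * P β) / β := by
      intro a b c d e
      field_simp
      ring
    rw [e, abs_le, div_le_iff₀ hβ0, le_div_iff₀ hβ0]
    constructor <;> linarith
  · intro β hβ L Fs hFs
    have h1 := gibbs_tail (hC.scale hβ) (hRPF β hβ) (Real.exp_pos _).le (hbd β hβ).1 ((Fs : Set ℕ)ᶜ)
    have h2 := h1.trans (htl β hβ L Fs hFs)
    have h3 := le_of_mul_le_mul_left h2 (Real.exp_pos _)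
    simpa using h3

end Helpers


section Helpers

variable {A : ℕ → ℕ → Bool}

/-- continuous bounded sub-action with constant `m` -/
def SubA (f V : MarkovShift A → ℝ) (m : ℝ) : Prop :=
  Continuous V ∧ BoundedFun V ∧ ∀ x, f x + V x - V (shift x) - m ≤ 0

/-- bounded calibrated sub-action with constant `m` -/
def CalA (f V : MarkovShift A → ℝ) (m : ℝ) : Prop :=
  SubA f V m ∧ ∀ y, ∃ x, shift x = y ∧ f x + V x - V (shift x) - m = 0

theorem birkhoff_tel (f V : MarkovShift A → ℝ) (m : ℝ) (n : ℕ) (x : MarkovShift A) :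
    birkhoff (fun x => f x + V x - V (shift x) - m) n x =
      birkhoff f n x + V x - V (shift^[n] x) - n * m := by
  induction n with
  | zero => simp [birkhoff]
  | succ n ih =>
    have e : ∀ g : MarkovShift A → ℝ, birkhoff g (n + 1) x = birkhoff g n x + g (shift^[n] x) :=
      fun g => Finset.sum_range_succ _ _
    rw [e, e, ih, Function.iterate_succ_apply']
    push_cast
    ring

theorem CalA.backward {f V : MarkovShift A → ℝ} {m : ℝ} (h : CalA f V m) (y : MarkovShift A) :
    ∃ z : ℕ → MarkovShift A, z 0 = y ∧ ∀ n, shift (z (n + 1)) = z n ∧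
      f (z (n + 1)) + V (z (n + 1)) - V (z n) - m = 0 := by
  choose g hg1 hg2 using h.2
  refine ⟨fun n => g^[n] y, rfl, fun n => ?_⟩
  beta_reduce
  rw [Function.iterate_succ_apply']
  have := hg2 (g^[n] y)
  rw [hg1] at this
  exact ⟨hg1 _, this⟩

theorem CalA.le_of_sub {f V φ : MarkovShift A → ℝ} {m m' : ℝ} (h : CalA f V m)
    (hb : BoundedFun φ) (hφ : ∀ x, f x + φ x - φ (shift x) - m' ≤ 0) (x₀ : MarkovShift A) :
    m ≤ m' := by
  obtain ⟨z, hz0, hz⟩ := h.backward x₀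
  obtain ⟨C, hC⟩ := h.1.2.1
  obtain ⟨C', hC'⟩ := hb
  have key : ∀ n : ℕ, n * (m - m') + V (z 0) - φ (z 0) ≤ V (z n) - φ (z n) + 0 := by
    intro n
    induction n with
    | zero => simp
    | succ n ih =>
      have h1 := (hz n).2
      have h2 := hφ (z (n + 1))
      rw [(hz n).1] at h2
      push_cast
      linarith
  by_contra hcon
  push Not at hcon
  obtain ⟨n, hn⟩ := exists_nat_gt ((2 * C + 2 * C') / (m - m'))
  rw [div_lt_iff₀ (by linarith)] at hn
  have := key n
  have a1 := abs_le.1 (hC (z 0))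
  have a2 := abs_le.1 (hC (z n))
  have a3 := abs_le.1 (hC' (z 0))
  have a4 := abs_le.1 (hC' (z n))
  linarith

theorem exists_FL {s : ℕ → ℝ} (hs : Summable fun a => Real.exp (s a)) (L : ℝ) :
    ∃ Fs : Finset ℕ, ∀ a, a ∉ Fs → s a ≤ -L := by
  have h1 := hs.tendsto_cofinite_zero.eventually (gt_mem_nhds (Real.exp_pos (-L)))
  refine ⟨(Filter.eventually_cofinite.1 h1).toFinset, fun a ha => ?_⟩
  simp only [Set.Finite.mem_toFinset, Set.mem_ofPred_eq, not_not] at ha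
  exact (Real.exp_lt_exp.1 ha).le

theorem krylov {E : Type*} [TopologicalSpace E] [CompactSpace E] [PolishSpace E]
    [MeasurableSpace E] [BorelSpace E] [Nonempty E] (T : E → E) (hT : Continuous T) :
    ∃ μ : Measure E, IsProbabilityMeasure μ ∧ μ.map T = μ := by
  obtain ⟨x⟩ := ‹Nonempty E›
  let m : ℕ → Measure E := fun n => ((n : ℝ≥0∞) + 1)⁻¹ • ∑ j ∈ Finset.range (n + 1), Measure.dirac (T^[j] x)
  have hm : ∀ n, IsProbabilityMeasure (m n) := by
    intro n
    constructor
    simp only [m, Measure.smul_apply, Measure.finsetSum_apply, measure_univ, smul_eq_mul]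
    simp only [Finset.sum_const, Finset.card_range, nsmul_eq_mul, mul_one]
    push_cast
    exact ENNReal.inv_mul_cancel (by simp) (by simp [ENNReal.add_eq_top])
  let P : ℕ → ProbabilityMeasure E := fun n => ⟨m n, hm n⟩
  have hintg : ∀ n (g : BoundedContinuousFunction E ℝ), ∫ x, g x ∂(m n) =
      ((n : ℝ) + 1)⁻¹ * ∑ j ∈ Finset.range (n + 1), g (T^[j] x) := by
    intro n g
    simp only [m]
    rw [integral_smul_measure, integral_finsetSum_measure]
    · simp only [integral_dirac, smul_eq_mul]
      congr 1
      rw [ENNReal.toReal_inv, ENNReal.toReal_add (by simp) (by simp)]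
      simp
    · intro i _
      exact g.integrable _
  let U : Ultrafilter ℕ := Ultrafilter.of atTop
  have hU : (U : Filter ℕ) ≤ atTop := Ultrafilter.of_le atTop
  obtain ⟨μ, -, hμ⟩ := (isCompact_univ (X := ProbabilityMeasure E)).ultrafilter_le_nhds (U.map P) (by simp)
  have hμ' : Tendsto P U (𝓝 μ) := hμ
  rw [ProbabilityMeasure.tendsto_iff_forall_integral_tendsto] at hμ'
  refine ⟨μ, inferInstance, ?_⟩
  have : IsProbabilityMeasure ((μ : Measure E).map T) :=
    Measure.isProbabilityMeasure_map hT.measurable.aemeasurable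
  refine ext_of_forall_integral_eq_of_IsFiniteMeasure fun g => ?_
  rw [integral_map hT.measurable.aemeasurable g.continuous.aestronglyMeasurable]
  let g' : BoundedContinuousFunction E ℝ := g.compContinuous ⟨T, hT⟩
  have h1 := hμ' g
  have h2 := hμ' g'
  have h3 : Tendsto (fun n => ∫ x, g' x ∂(m n) - ∫ x, g x ∂(m n)) U (𝓝 0) := by
    refine Tendsto.mono_left ?_ hU
    have e : ∀ n, ∫ x, g' x ∂(m n) - ∫ x, g x ∂(m n) =
        ((n : ℝ) + 1)⁻¹ * (g (T^[n + 1] x) - g x) := by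
      intro n
      rw [hintg, hintg, ← mul_sub]
      congr 1
      have := Finset.sum_range_sub (fun j => g (T^[j] x)) (n + 1)
      rw [Finset.sum_sub_distrib] at this
      rw [← Function.iterate_zero_apply T x, ← Function.iterate_zero_apply T x] at this
      refine Eq.trans ?_ this
      congr 1
      refine Finset.sum_congr rfl fun j _ => ?_
      rw [Function.iterate_succ_apply']
      rfl
    simp only [e]
    refine squeeze_zero_norm (a := fun n : ℕ => ((n : ℝ) + 1)⁻¹ * (2 * ‖g‖)) (fun n => ?_) ?_
    · rw [norm_mul, Real.norm_of_nonneg (by positivity)]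
      gcongr
      exact (norm_sub_le _ _).trans (by linarith [g.norm_coe_le_norm (T^[n+1] x), g.norm_coe_le_norm x])
    · have := (tendsto_one_div_add_atTop_nhds_zero_nat (𝕜 := ℝ)).mul_const (2 * ‖g‖)
      simpa using this
  have h4 := tendsto_nhds_unique h3 (h2.sub h1)
  have h5 : ∫ x, g' x ∂(μ : Measure E) = ∫ x, g x ∂(μ : Measure E) := by linarith
  exact h5

theorem coord_mem_of_R {f V : MarkovShift A → ℝ} {m : ℝ} {s : ℕ → ℝ} (hup : ∀ x, f x ≤ s (x.1 0))
    (hs : Summable fun a => Real.exp (s a)) (hV : BoundedFun V) (c : ℝ) :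
    ∃ Fs : Finset ℕ, ∀ x, -c ≤ f x + V x - V (shift x) - m → x.1 0 ∈ Fs := by
  obtain ⟨C, hC⟩ := hV
  obtain ⟨Fs, hF⟩ := exists_FL hs (c + 2 * C - m + 1)
  refine ⟨Fs, fun x hx => ?_⟩
  by_contra hcon
  have h1 := hF _ hcon
  have h2 := hup x
  have a1 := abs_le.1 (hC x)
  have a2 := abs_le.1 (hC (shift x))
  linarith

theorem full_of_invariant {f V : MarkovShift A → ℝ} {s : ℕ → ℝ} (hup : ∀ x, f x ≤ s (x.1 0))
    (hs : Summable fun a => Real.exp (s a)) {μmax : Measure (MarkovShift A)}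
    (huniq : ∀ ν', IsMaximizing f ν' → ν' = μmax)
    (hV : SubA f V (mf f)) {Λ : Set (MarkovShift A)} (hcl : IsClosed Λ) (hne : Λ.Nonempty)
    (hinv : ∀ x ∈ Λ, shift x ∈ Λ) (hR : ∀ x ∈ Λ, f x + V x - V (shift x) - mf f = 0)
    (hf : Continuous f) :
    μmax Λᶜ = 0 ∧ IsProbabilityMeasure μmax := by
  obtain ⟨Fs, hFs⟩ := coord_mem_of_R (m := mf f) hup hs hV.2.1 0
  have hit : ∀ i, ∀ x ∈ Λ, shift^[i] x ∈ Λ := by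
    intro i
    induction i with
    | zero => intro x hx; exact hx
    | succ i ih => intro x hx; rw [Function.iterate_succ_apply]; exact ih _ (hinv x hx)
  have hcpt : IsCompact Λ := by
    refine (isCompact_box (A := A) fun _ => Fs).of_isClosed_subset hcl fun x hx => ?_
    intro i
    have h1 := hFs (shift^[i] x) (by rw [hR _ (hit i x hx)]; simp)
    rw [shift_iter_coord] at h1
    exact h1
  have : CompactSpace Λ := isCompact_iff_compactSpace.1 hcpt
  have : PolishSpace Λ := hcl.polishSpace
  have : Nonempty Λ := hne.to_subtype
  let T : Λ → Λ := fun x => ⟨shift x.1, hinv x.1 x.2⟩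
  have hT : Continuous T := (continuous_shift.comp continuous_subtype_val).subtype_mk _
  obtain ⟨μ, hμ, hμT⟩ := krylov T hT
  let ν' := μ.map Subtype.val
  have mv : Measurable (Subtype.val : Λ → MarkovShift A) := measurable_subtype_coe
  have hp : IsProbabilityMeasure ν' := Measure.isProbabilityMeasure_map mv.aemeasurable
  have hc0 : ν' Λᶜ = 0 := by
    rw [Measure.map_apply mv hcl.measurableSet.compl]
    simp
  have hi : ν'.map shift = ν' := by
    rw [Measure.map_map continuous_shift.measurable mv]
    conv_rhs => rw [show ν' = μ.map Subtype.val from rfl, ← hμT, Measure.map_map mv hT.measurable]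
    rfl
  have hae : ∀ᵐ x ∂ν', f x = V (shift x) - V x + mf f := by
    rw [ae_iff]
    refine measure_mono_null ?_ hc0
    intro x hx hxΛ
    exact hx (by linarith [hR x hxΛ])
  obtain ⟨C, hC⟩ := hV.2.1
  have iV : Integrable V ν' := by
    refine Integrable.of_bound hV.1.aestronglyMeasurable C (ae_of_all _ fun x => ?_)
    exact hC x
  have iVs : Integrable (fun x => V (shift x)) ν' := by
    refine Integrable.of_bound (hV.1.comp continuous_shift).aestronglyMeasurable C (ae_of_all _ fun x => ?_)
    exact hC _
  have if' : Integrable f ν' := by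
    refine Integrable.congr ((iVs.sub iV).add (integrable_const (mf f))) ?_
    filter_upwards [hae] with x hx
    rw [hx]; rfl
  have e1 : ∫ x, V (shift x) ∂ν' = ∫ x, V x ∂ν' := by
    conv_rhs => rw [← hi]
    rw [integral_map continuous_shift.measurable.aemeasurable hV.1.aestronglyMeasurable]
  have e2 : ∫ x, f x ∂ν' = mf f := by
    rw [integral_congr_ae hae]
    rw [integral_add (f := fun x => V (shift x) - V x) (iVs.sub iV) (integrable_const _), integral_sub iVs iV, e1]
    simp
  have : ν' = μmax := huniq ν' ⟨⟨hp, hi⟩, if', e2⟩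
  rw [← this]
  exact ⟨hc0, hp⟩

theorem inter_of_full {μ : Measure (MarkovShift A)} [IsProbabilityMeasure μ] {S T : Set (MarkovShift A)}
    (hS : μ Sᶜ = 0) (hT : μ Tᶜ = 0) : (S ∩ T).Nonempty := by
  by_contra h
  rw [Set.not_nonempty_iff_eq_empty] at h
  have : (Set.univ : Set (MarkovShift A)) ⊆ Sᶜ ∪ Tᶜ := by
    rw [← Set.compl_inter, h]; simp
  have h1 := (measure_mono this).trans (measure_union_le (μ := μ) Sᶜ Tᶜ)
  rw [hS, hT, measure_univ] at h1
  simp at h1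

/-- limit sets have full measure -/
theorem limitset_full {f V : MarkovShift A → ℝ} {s : ℕ → ℝ} (hup : ∀ x, f x ≤ s (x.1 0))
    (hs : Summable fun a => Real.exp (s a)) {μmax : Measure (MarkovShift A)}
    (huniq : ∀ ν', IsMaximizing f ν' → ν' = μmax)
    (hV : SubA f V (mf f)) (hf : Continuous f) {z : ℕ → MarkovShift A} {F : ℕ → Finset ℕ}
    (hz : ∀ n i, (z n).1 i ∈ F i) {t : ℕ → ℕ} (ht : Tendsto t atTop atTop)
    (hzt : ∀ᶠ n in atTop, shift (z n) = z (t n))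
    (hR : Tendsto (fun n => f (z n) + V (z n) - V (shift (z n)) - mf f) atTop (𝓝 0)) :
    μmax {p | MapClusterPt p atTop z}ᶜ = 0 ∧ IsProbabilityMeasure μmax := by
  refine full_of_invariant hup hs huniq hV isClosed_setOfPred_clusterPt ?_ ?_ ?_ hf
  · obtain ⟨p, -, hp⟩ := (isCompact_box (A := A) F).exists_mapClusterPt (f := atTop) (u := z)
      (Filter.tendsto_principal.2 (Eventually.of_forall fun n => hz n))
    exact ⟨p, hp⟩
  · intro p hp
    change MapClusterPt p atTop z at hp
    change MapClusterPt _ atTop z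
    rw [mapClusterPt_iff_ultrafilter] at hp ⊢
    obtain ⟨U, hU, hp⟩ := hp
    refine ⟨U.map t, ?_, ?_⟩
    · exact (Filter.map_mono hU).trans ht
    · have h1 : Tendsto (fun n => shift (z n)) U (𝓝 (shift p)) :=
        (continuous_shift.tendsto p).comp hp
      have h2 : Tendsto (fun n => z (t n)) U (𝓝 (shift p)) :=
        h1.congr' (hU hzt)
      exact h2
  · intro p hp
    change MapClusterPt p atTop z at hp
    rw [mapClusterPt_iff_ultrafilter] at hp
    obtain ⟨U, hU, hp⟩ := hp
    have hc : Continuous fun x => f x + V x - V (shift x) - mf f :=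
      (((hf.add hV.1).sub (hV.1.comp continuous_shift)).sub continuous_const)
    exact tendsto_nhds_unique ((hc.tendsto p).comp hp) (hR.mono_left hU)

theorem CalA.alpha {f V V' : MarkovShift A → ℝ} {s : ℕ → ℝ} (hup : ∀ x, f x ≤ s (x.1 0))
    (hs : Summable fun a => Real.exp (s a)) {μmax : Measure (MarkovShift A)}
    (huniq : ∀ ν', IsMaximizing f ν' → ν' = μmax) (hf : Continuous f)
    (hV : CalA f V (mf f)) (hV' : SubA f V' (mf f)) (y : MarkovShift A) :
    ∃ Λ : Set (MarkovShift A), μmax Λᶜ = 0 ∧ IsProbabilityMeasure μmax ∧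
      ∀ p ∈ Λ, V' p - V p ≤ V' y - V y := by
  obtain ⟨z, hz0, hz⟩ := hV.backward y
  obtain ⟨Fs, hFs⟩ := coord_mem_of_R (m := mf f) hup hs hV.1.2.1 0
  have hco : ∀ n i, (z n).1 i ∈ Fs ∪ (Finset.range (i + 1)).image y.1 := by
    intro n
    induction n with
    | zero =>
      intro i
      rw [hz0]
      exact Finset.mem_union_right _ (Finset.mem_image.2 ⟨i, by simp, rfl⟩)
    | succ n ih =>
      intro i
      cases i with
      | zero =>
        refine Finset.mem_union_left _ (hFs _ ?_)
        rw [(hz n).1, (hz n).2]; simp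
      | succ i =>
        have h1 := ih i
        rw [← (hz n).1, shift_coord] at h1
        refine Finset.union_subset_union le_rfl (Finset.image_subset_image ?_) h1
        intro j hj
        simp only [Finset.mem_range] at hj ⊢
        omega
  obtain ⟨h1, h2⟩ := limitset_full hup hs huniq hV.1 hf hco (t := fun n => n - 1)
    (tendsto_sub_atTop_nat 1) (by
      filter_upwards [eventually_ge_atTop 1] with n hn
      obtain ⟨k, rfl⟩ := Nat.exists_eq_add_of_le' hn
      exact (hz k).1) (by
      refine tendsto_const_nhds.congr' ?_
      filter_upwards [eventually_ge_atTop 1] with n hn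
      obtain ⟨k, rfl⟩ := Nat.exists_eq_add_of_le' hn
      rw [(hz k).1, (hz k).2])
  refine ⟨_, h1, h2, fun p hp => ?_⟩
  change MapClusterPt p atTop z at hp
  rw [mapClusterPt_iff_ultrafilter] at hp
  obtain ⟨U, hU, hp⟩ := hp
  have hc : Continuous fun x => V' x - V x := hV'.1.sub hV.1.1
  refine le_of_tendsto ((hc.tendsto p).comp hp) (Eventually.of_forall fun n => ?_)
  change V' (z n) - V (z n) ≤ _
  induction n with
  | zero => rw [hz0]
  | succ n ih =>
    refine le_trans ?_ ih
    have h1 := hV'.2.2 (z (n + 1))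
    have h2 := (hz n).2
    rw [(hz n).1] at h1
    linarith

/-- uniqueness of calibrated sub-actions -/
theorem CalA.unique {f V V' : MarkovShift A → ℝ} {s : ℕ → ℝ} (hup : ∀ x, f x ≤ s (x.1 0))
    (hs : Summable fun a => Real.exp (s a)) {μmax : Measure (MarkovShift A)}
    (huniq : ∀ ν', IsMaximizing f ν' → ν' = μmax) (hf : Continuous f)
    (hV : CalA f V (mf f)) (hV' : CalA f V' (mf f)) (y y' : MarkovShift A) :
    V' y' - V y' ≤ V' y - V y := by
  obtain ⟨Λ, h1, h2, h3⟩ := CalA.alpha hup hs huniq hf hV hV'.1 y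
  obtain ⟨Λ', h1', h2', h3'⟩ := CalA.alpha hup hs huniq hf hV' hV.1 y'
  obtain ⟨p, hp, hp'⟩ := inter_of_full h1 h1'
  have := h3 p hp
  have := h3' p hp'
  linarith

end Helpers


section Helpers

variable {A : ℕ → ℕ → Bool}

theorem ult_lim {U : Ultrafilter ℝ} {g : ℝ → ℝ} {a b : ℝ}
    (h : ∀ᶠ β in (U : Filter ℝ), g β ∈ Set.Icc a b) : ∃ l, Tendsto g U (𝓝 l) := by
  obtain ⟨l, -, hl⟩ := (isCompact_Icc (a := a) (b := b)).ultrafilter_le_nhds (U.map g)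
    (by rw [Filter.le_principal_iff]; exact h)
  exact ⟨l, hl⟩

theorem tail_small (D m S1 N : ℝ) : ∃ L : ℝ, ∀ᶠ β : ℝ in atTop, ∀ q, m ≤ q →
    Real.exp (β * (D - q) - (β - 1) * L) * S1 ≤ Real.exp (-N * β) := by
  set L := D - m + N + 1 with hL
  refine ⟨L, ?_⟩
  have h1 : Tendsto (fun β : ℝ => β - L) atTop atTop := tendsto_atTop_add_const_right _ _ tendsto_id
  filter_upwards [eventually_gt_atTop 1, (Real.tendsto_exp_atTop.comp h1).eventually_ge_atTop S1]
    with β hβ h2 q hq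
  simp only [Function.comp] at h2
  calc Real.exp (β * (D - q) - (β - 1) * L) * S1
      ≤ Real.exp (β * (D - q) - (β - 1) * L) * Real.exp (β - L) := by gcongr
    _ = Real.exp (β * (D - q) - (β - 1) * L + (β - L)) := (Real.exp_add _ _).symm
    _ ≤ _ := by
      gcongr
      have : 0 ≤ β * (q - m) := mul_nonneg (by linarith) (by linarith)
      have e : β * L = β * (D - m) + β * N + β := by rw [hL]; ring
      nlinarith

section ZTsec

variable {f V : MarkovShift A → ℝ} {s : ℕ → ℝ} {M : ℕ → ℝ} {D Q S1 : ℝ}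
  {φ : ℝ → MarkovShift A → ℝ} {q : ℝ → ℝ} {μ : ℝ → Measure (MarkovShift A)}

theorem ZT.q_ge (Z : ZT f s M D Q S1 φ q μ) (hV : CalA f V (mf f)) (x₀ : MarkovShift A) {β : ℝ}
    (hβ : 1 < β) : mf f ≤ q β := by
  refine hV.le_of_sub ⟨|φ β x₀| + D, fun x => ?_⟩ (Z.sub β hβ) x₀
  have h1 := Z.osc β hβ x x₀
  have h2 := Z.osc β hβ x₀ x
  have h3 := abs_le.1 (le_refl |φ β x₀|)
  rw [abs_le]
  constructor <;> linarith

set_option maxHeartbeats 400000 in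
theorem ZT.lim (Z : ZT f s M D Q S1 φ q μ) {μmax : Measure (MarkovShift A)}
    (huniq : ∀ ν', IsMaximizing f ν' → ν' = μmax) (hV : CalA f V (mf f)) (U : Ultrafilter ℝ)
    (hU : (U : Filter ℝ) ≤ atTop) (x : MarkovShift A) :
    Tendsto (fun β => f x + φ β x - φ β (shift x) - q β) U
      (𝓝 (f x + V x - V (shift x) - mf f)) := by
  set x₀ := x with hx₀
  clear_value x₀
  have hev : ∀ᶠ β in (U : Filter ℝ), 1 < β := hU (eventually_gt_atTop 1)
  obtain ⟨m', hm'⟩ : ∃ l, Tendsto q U (𝓝 l) := by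
    refine ult_lim (a := mf f) (b := Q) ?_
    filter_upwards [hev] with β hβ
    exact ⟨Z.q_ge hV x₀ hβ, Z.qub β hβ⟩
  have hψ : ∀ x, ∃ l, Tendsto (fun β => φ β x - φ β x₀) U (𝓝 l) := by
    intro x
    refine ult_lim (a := -D) (b := D) ?_
    filter_upwards [hev] with β hβ
    exact ⟨by linarith [Z.osc β hβ x₀ x], Z.osc β hβ x x₀⟩
  choose ψ hψ using hψ
  have hdiff : ∀ x y, Tendsto (fun β => φ β x - φ β y) U (𝓝 (ψ x - ψ y)) := by
    intro x y
    refine ((hψ x).sub (hψ y)).congr fun β => ?_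
    ring
  have hmod : ∀ k, 1 ≤ k → ∀ x y : MarkovShift A, (∀ i < k, x.1 i = y.1 i) → ψ x - ψ y ≤ M k := by
    intro k hk x y hxy
    refine le_of_tendsto (hdiff x y) ?_
    filter_upwards [hev] with β hβ
    exact Z.mod β hβ k hk x y hxy
  have hcont : Continuous ψ := by
    refine continuous_of_mod Z.M0 fun k hk x y hxy => ?_
    have h1 := hmod k hk x y (fun i hi => hxy i (by omega))
    have h2 := hmod k hk y x (fun i hi => (hxy i (by omega)).symm)
    rw [abs_le]
    constructor <;> linarith
  have hbdd : BoundedFun ψ := by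
    refine ⟨|ψ x₀| + D, fun x => ?_⟩
    have h1 : ψ x - ψ x₀ ≤ D := by
      refine le_of_tendsto (hdiff x x₀) ?_
      filter_upwards [hev] with β hβ
      exact Z.osc β hβ x x₀
    have h2 : ψ x₀ - ψ x ≤ D := by
      refine le_of_tendsto (hdiff x₀ x) ?_
      filter_upwards [hev] with β hβ
      exact Z.osc β hβ x₀ x
    have h3 := abs_le.1 (le_refl |ψ x₀|)
    rw [abs_le]
    constructor <;> linarith
  have hlim : ∀ x y, Tendsto (fun β => f x + φ β x - φ β y - q β) U
      (𝓝 (f x + ψ x - ψ y - m')) := by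
    intro x y
    have := ((tendsto_const_nhds (x := f x)).add (hdiff x y)).sub hm'
    rw [show f x + ψ x - ψ y - m' = f x + (ψ x - ψ y) - m' by ring]
    refine this.congr fun β => ?_
    ring
  have hsub : ∀ x, f x + ψ x - ψ (shift x) - m' ≤ 0 := by
    intro x
    refine le_of_tendsto (hlim x (shift x)) ?_
    filter_upwards [hev] with β hβ
    exact Z.sub β hβ x
  have hcal : CalA f ψ m' := by
    refine ⟨⟨hcont, hbdd, hsub⟩, fun y => ?_⟩
    obtain ⟨L, hL⟩ := tail_small D (mf f) S1 1
    obtain ⟨Fs, hFs⟩ := exists_FL Z.summ L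
    set N : ℝ := 2 * (Fs.card + 1) with hN
    have hNp : 0 < N := by positivity
    have key : ∀ᶠ β in (U : Filter ℝ), ∃ a ∈ (Fs : Set ℕ), A a (y.1 0) = true ∧
        -(Real.log N) / β ≤ f (cons a y) + φ β (cons a y) - φ β y - q β := by
      filter_upwards [hev, hU hL, hU (eventually_ge_atTop 1)] with β hβ h1 _
      have h2 := Z.calib β hβ L Fs hFs y
      have h3 := h1 (q β) (Z.q_ge hV x₀ hβ)
      have h4 : Real.exp (-1 * β) ≤ 1 / 2 := by
        have : Real.exp (-1 * β) ≤ Real.exp (-1) := by gcongr; linarith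
        have h5 : Real.exp (-1) ≤ 1 / 2 := by
          rw [Real.exp_neg, one_div]
          gcongr
          have := Real.add_one_le_exp (1 : ℝ)
          linarith
        linarith
      by_contra hcon
      push Not at hcon
      have h6 : ∀ a ∈ Fs, (if A a (y.1 0) = true then
          Real.exp (β * (f (cons a y) + φ β (cons a y) - φ β y - q β)) else 0) ≤ N⁻¹ := by
        intro a ha
        split_ifs with hA
        · have := hcon a ha hA
          rw [lt_div_iff₀ (by linarith)] at this
          rw [← Real.exp_log hNp, ← Real.exp_neg]
          gcongr
          linarith
        · positivity
      have h7 := Finset.sum_le_card_nsmul _ _ _ h6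
      rw [nsmul_eq_mul] at h7
      have h8 : (Fs.card : ℝ) * N⁻¹ < 1 / 2 := by
        rw [mul_inv_lt_iff₀ hNp, hN]
        linarith
      have h9 : (1 : ℝ) ≤ Fs.card * N⁻¹ + 1 / 2 := by
        refine h2.trans (add_le_add ?_ (h3.trans h4))
        convert h7
      linarith
    rw [Ultrafilter.eventually_exists_mem_iff Fs.finite_toSet] at key
    obtain ⟨a, -, ha⟩ := key
    obtain ⟨hA, -⟩ : A a (y.1 0) = true ∧ True := by
      obtain ⟨β, hβ⟩ := ha.exists
      exact ⟨hβ.1, trivial⟩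
    refine ⟨cons a y, shift_cons hA, le_antisymm (hsub _) ?_⟩
    rw [shift_cons hA]
    refine le_of_tendsto_of_tendsto ?_ (hlim (cons a y) y) (ha.mono fun β hβ => hβ.2)
    exact (tendsto_const_nhds.div_atTop tendsto_id).mono_left hU
  have hm : m' = mf f := le_antisymm (hcal.le_of_sub hV.1.2.1 hV.1.2.2 x₀)
    (hV.le_of_sub hbdd hsub x₀)
  subst hm
  have e1 := CalA.unique Z.up Z.summ huniq Z.cont hV hcal x₀ (shift x₀)
  have e2 := CalA.unique Z.up Z.summ huniq Z.cont hV hcal (shift x₀) x₀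
  have e3 : f x₀ + V x₀ - V (shift x₀) - mf f = f x₀ + ψ x₀ - ψ (shift x₀) - mf f := by linarith
  rw [e3]
  exact hlim _ _

theorem ZT.lim_birk (Z : ZT f s M D Q S1 φ q μ) {μmax : Measure (MarkovShift A)}
    (huniq : ∀ ν', IsMaximizing f ν' → ν' = μmax) (hV : CalA f V (mf f)) (U : Ultrafilter ℝ)
    (hU : (U : Filter ℝ) ≤ atTop) (n : ℕ) (x : MarkovShift A) :
    Tendsto (fun β => birkhoff f n x + φ β x - φ β (shift^[n] x) - n * q β) U
      (𝓝 (birkhoff (fun x => f x + V x - V (shift x) - mf f) n x)) := by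
  have : ∀ β, birkhoff f n x + φ β x - φ β (shift^[n] x) - n * q β =
    birkhoff (fun x => f x + φ β x - φ β (shift x) - q β) n x := fun β => (birkhoff_tel _ _ _ _ _).symm
  simp only [this]
  simp only [birkhoff]
  exact tendsto_finsetSum _ fun j _ => Z.lim huniq hV U hU _

end ZTsec

end Helpers


section Helpers

variable {A : ℕ → ℕ → Bool}

/-- exponential lower bound along an ultrafilter -/
def Good (μ : ℝ → Measure (MarkovShift A)) (U : Ultrafilter ℝ) (t : ℝ)
    (S : Set (MarkovShift A)) : Prop :=
  ∀ ε > 0, ∀ᶠ β in (U : Filter ℝ), Real.exp (β * (t - ε)) ≤ (μ β).real S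

theorem cylOf_eq {x y : MarkovShift A} {n : ℕ} (h : ∀ i < n, y.1 i = x.1 i) :
    cylOf y n = cylOf x n := by
  ext z
  exact ⟨fun hz i hi => (hz i hi).trans (h i hi), fun hz i hi => (hz i hi).trans (h i hi).symm⟩

theorem frequently_iff_exists_ultrafilter {p : ℝ → Prop} (h : ∃ᶠ β in atTop, p β) :
    ∃ U : Ultrafilter ℝ, (U : Filter ℝ) ≤ atTop ∧ ∀ᶠ β in (U : Filter ℝ), p β := by
  have : NeBot (atTop ⊓ 𝓟 {β | p β}) := Filter.frequently_mem_iff_neBot.1 h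
  obtain ⟨U, hU⟩ := Ultrafilter.exists_le (atTop ⊓ 𝓟 {β | p β})
  exact ⟨U, hU.trans inf_le_left, Filter.le_principal_iff.1 (hU.trans inf_le_right)⟩

section ZTsec

variable {f V : MarkovShift A → ℝ} {s : ℕ → ℝ} {M : ℕ → ℝ} {D Q S1 : ℝ}
  {φ : ℝ → MarkovShift A → ℝ} {q : ℝ → ℝ} {μ : ℝ → Measure (MarkovShift A)}

theorem ZT.inv_iter (Z : ZT f s M D Q S1 φ q μ) {β : ℝ} (hβ : 1 < β) (n : ℕ) :
    (μ β).map (shift^[n]) = μ β := by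
  induction n with
  | zero => simp
  | succ n ih =>
    rw [Function.iterate_succ, ← Measure.map_map (continuous_shift_iter n).measurable
      continuous_shift.measurable, Z.inv β hβ, ih]

theorem ZT.tail_n (Z : ZT f s M D Q S1 φ q μ) (hV : CalA f V (mf f)) (x₀ : MarkovShift A) (N : ℝ) :
    ∃ Fs : Finset ℕ, ∀ᶠ β in atTop, ∀ n : ℕ, (μ β).real {x | x.1 n ∉ Fs} ≤ Real.exp (-N * β) := by
  obtain ⟨L, hL⟩ := tail_small D (mf f) S1 N
  obtain ⟨Fs, hFs⟩ := exists_FL Z.summ L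
  refine ⟨Fs, ?_⟩
  filter_upwards [hL, eventually_gt_atTop 1] with β h1 hβ n
  have h2 := (Z.tail β hβ L Fs hFs).trans (h1 _ (Z.q_ge hV x₀ hβ))
  refine le_trans (le_of_eq ?_) h2
  conv_rhs => rw [← Z.inv_iter hβ n]
  rw [measureReal_def, measureReal_def, Measure.map_apply (continuous_shift_iter n).measurable]
  · congr 2
    ext x
    change x.1 n ∉ Fs ↔ (shift^[n] x).1 0 ∉ Fs
    rw [shift_iter_coord, add_zero]
  · have : {x : MarkovShift A | x.1 0 ∉ Fs} = (fun x : MarkovShift A => x.1 0) ⁻¹' {a | a ∉ Fs} := rfl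
    rw [this]
    exact (continuous_coord 0).measurable (MeasurableSet.of_discrete)

theorem Good.extend (Z : ZT f s M D Q S1 φ q μ) (hV : CalA f V (mf f)) {U : Ultrafilter ℝ}
    (hU : (U : Filter ℝ) ≤ atTop) {t : ℝ} {y : MarkovShift A} {n : ℕ}
    (h : Good μ U t (cylOf y n)) : ∃ z ∈ cylOf y n, Good μ U t (cylOf z (n + 1)) := by
  obtain ⟨Fs, hFs⟩ := Z.tail_n hV y (-t + 1)
  have hev : ∀ᶠ β in (U : Filter ℝ), 1 < β := hU (eventually_gt_atTop 1)
  have key : ∃ a ∈ Fs, Good μ U t (cylOf y n ∩ {x | x.1 n = a}) := by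
    by_contra hcon
    push Not at hcon
    have h1 : ∀ a ∈ Fs, ∀ᶠ ε in 𝓝[>] (0 : ℝ), ∀ᶠ β in (U : Filter ℝ),
        (μ β).real (cylOf y n ∩ {x | x.1 n = a}) < Real.exp (β * (t - ε)) := by
      intro a ha
      have h2 := hcon a ha
      simp only [Good] at h2
      push Not at h2
      obtain ⟨ε₀, hε₀, h2⟩ := h2
      filter_upwards [Ioo_mem_nhdsGT hε₀] with ε hε
      filter_upwards [h2, hev] with β h3 hβ
      refine h3.trans_le ?_
      have := hε.2
      gcongr
    rw [← Filter.eventually_all_finset] at h1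
    obtain ⟨ε, hε1, hε⟩ := (h1.and (Ioo_mem_nhdsGT (zero_lt_one' ℝ))).exists
    replace hε1 := (Filter.eventually_all_finset Fs).2 hε1
    have h3 := h (ε / 2) (by have := hε.1; linarith)
    have h4 : ∀ᶠ β : ℝ in atTop, (Fs.card + 1 : ℝ) < Real.exp (β * (ε / 2)) :=
      (Real.tendsto_exp_atTop.comp (tendsto_id.atTop_mul_const (by have := hε.1; linarith :
        0 < ε / 2))).eventually_gt_atTop _
    obtain ⟨β, h3, h4, h5, h6, hβ⟩ := (h3.and ((h4.filter_mono hU).and (hε1.and ((hFs.filter_mono hU).and hev)))).exists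
    have := Z.prob β hβ
    have h7 : (μ β).real (cylOf y n) ≤ Real.exp (-(-t + 1) * β) +
        ∑ a ∈ Fs, (μ β).real (cylOf y n ∩ {x | x.1 n = a}) := by
      have hsub : cylOf y n ⊆ {x | x.1 n ∉ Fs} ∪ ⋃ a ∈ Fs, (cylOf y n ∩ {x | x.1 n = a}) := by
        intro x hx
        by_cases hxF : x.1 n ∈ Fs
        · right
          simp only [Set.mem_iUnion]
          exact ⟨x.1 n, hxF, hx, rfl⟩
        · left; exact hxF
      refine (measureReal_mono hsub).trans ((measureReal_union_le _ _).trans ?_)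
      exact add_le_add (h6 n) (measureReal_biUnion_finset_le _ _)
    have h8 : ∑ a ∈ Fs, (μ β).real (cylOf y n ∩ {x | x.1 n = a}) ≤
        Fs.card * Real.exp (β * (t - ε)) := by
      rw [← nsmul_eq_mul]
      exact Finset.sum_le_card_nsmul _ _ _ fun a ha => (h5 a ha).le
    have h9 : Real.exp (-(-t + 1) * β) ≤ Real.exp (β * (t - ε)) := by
      rw [Real.exp_le_exp]
      have hε2 : ε < 1 := hε.2
      have := mul_pos (by linarith : 0 < β) (sub_pos.2 hε2)
      linarith
    have h10 : Real.exp (β * (t - ε / 2)) = Real.exp (β * (t - ε)) * Real.exp (β * (ε / 2)) := by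
      rw [← Real.exp_add]; congr 1; ring
    have h11 := mul_lt_mul_of_pos_left h4 (Real.exp_pos (β * (t - ε)))
    linarith
  obtain ⟨a, -, ha⟩ := key
  have hne : (cylOf y n ∩ {x | x.1 n = a}).Nonempty := by
    obtain ⟨β, hβ⟩ := (ha 1 one_pos).exists
    by_contra hcon
    rw [Set.not_nonempty_iff_eq_empty] at hcon
    rw [hcon] at hβ
    simp only [measureReal_empty] at hβ
    exact absurd hβ (not_le.2 (Real.exp_pos _))
  obtain ⟨z, hz, hza⟩ := hne
  refine ⟨z, hz, ?_⟩
  have : cylOf z (n + 1) = cylOf y n ∩ {x | x.1 n = a} := by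
    change z.1 n = a at hza
    ext x
    constructor
    · intro hx
      exact ⟨fun i hi => (hx i (by omega)).trans (hz i hi), (hx n (by omega)).trans hza⟩
    · rintro ⟨hx, hxa⟩ i hi
      rcases Nat.lt_succ_iff_lt_or_eq.1 hi with h1 | rfl
      · exact (hx i h1).trans (hz i h1).symm
      · exact Eq.trans hxa hza.symm
  rw [this]
  exact ha

theorem Good.point (Z : ZT f s M D Q S1 φ q μ) (hV : CalA f V (mf f)) {U : Ultrafilter ℝ}
    (hU : (U : Filter ℝ) ≤ atTop) {t : ℝ} {y : MarkovShift A} {n : ℕ}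
    (h : Good μ U t (cylOf y n)) :
    ∃ z ∈ cylOf y n, ∀ i, Good μ U t (cylOf z (n + i)) := by
  have step : ∀ (i : ℕ) (y : {y : MarkovShift A // Good μ U t (cylOf y (n + i))}),
      ∃ z : {y : MarkovShift A // Good μ U t (cylOf y (n + (i + 1)))}, z.1 ∈ cylOf y.1 (n + i) := by
    intro i y
    obtain ⟨z, h1, h2⟩ := Good.extend Z hV hU y.2
    exact ⟨⟨z, h2⟩, h1⟩
  choose g hg using step
  let Y : ∀ i : ℕ, {y : MarkovShift A // Good μ U t (cylOf y (n + i))} := fun i =>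
    Nat.rec ⟨y, h⟩ (fun i yi => g i yi) i
  have hY : ∀ i, (Y (i + 1)).1 ∈ cylOf (Y i).1 (n + i) := fun i => hg i (Y i)
  have hY2 : ∀ i d j, j < n + i → (Y (i + d)).1.1 j = (Y i).1.1 j := by
    intro i d
    induction d with
    | zero => intro j _; rfl
    | succ d ih =>
      intro j hj
      exact (hY (i + d) j (by omega)).trans (ih j hj)
  have hY3 : ∀ i i' j, j < n + i → j < n + i' → (Y i).1.1 j = (Y i').1.1 j := by
    intro i i' j h1 h2
    rcases le_total i i' with h3 | h3
    · obtain ⟨d, rfl⟩ := Nat.exists_eq_add_of_le h3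
      exact (hY2 i d j h1).symm
    · obtain ⟨d, rfl⟩ := Nat.exists_eq_add_of_le h3
      exact hY2 i' d j h2
  let z : MarkovShift A := ⟨fun j => (Y (j + 1)).1.1 j, fun j => by
    have h1 := (Y (j + 2)).1.2 j
    rw [hY3 (j + 2) (j + 1) j (by omega) (by omega)] at h1
    exact h1⟩
  have hz : ∀ i, ∀ j < n + i, z.1 j = (Y i).1.1 j := fun i j hj =>
    hY3 (j + 1) i j (by omega) hj
  refine ⟨z, fun j hj => hz 0 j (by omega), fun i => ?_⟩
  rw [cylOf_eq (hz i)]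
  exact (Y i).2

theorem Good.log {U : Ultrafilter ℝ} (hU : (U : Filter ℝ) ≤ atTop) {t : ℝ}
    {S : Set (MarkovShift A)} (h : Good μ U t S) {ε : ℝ} (hε : 0 < ε) :
    ∀ᶠ β in (U : Filter ℝ), t - ε ≤ Real.log ((μ β).real S) / β := by
  filter_upwards [h ε hε, hU (eventually_gt_atTop 1)] with β h1 hβ
  have h2 := Real.log_le_log (Real.exp_pos _) h1
  rw [Real.log_exp] at h2
  rw [le_div_iff₀ (by linarith)]
  linarith

theorem ZT.log_nonpos (Z : ZT f s M D Q S1 φ q μ) {β : ℝ} (hβ : 1 < β) (S : Set (MarkovShift A)) :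
    Real.log ((μ β).real S) / β ≤ 0 := by
  have := Z.prob β hβ
  exact div_nonpos_of_nonpos_of_nonneg (Real.log_nonpos measureReal_nonneg measureReal_le_one)
    (by linarith)

theorem Good.rate (Z : ZT f s M D Q S1 φ q μ) {μmax : Measure (MarkovShift A)}
    (huniq : ∀ ν', IsMaximizing f ν' → ν' = μmax) (hV : CalA f V (mf f)) {U : Ultrafilter ℝ}
    (hU : (U : Filter ℝ) ≤ atTop) {t : ℝ} {z : MarkovShift A} {n : ℕ}
    (h : ∀ i, Good μ U t (cylOf z (n + i))) (N : ℕ) :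
    t ≤ birkhoff (fun x => f x + V x - V (shift x) - mf f) N z := by
  have hev : ∀ᶠ β in (U : Filter ℝ), 1 < β := hU (eventually_gt_atTop 1)
  refine le_of_forall_pos_le_add fun ε hε => ?_
  obtain ⟨k, hk1, hk⟩ := ((eventually_ge_atTop (n + 1)).and
    (Z.M0.eventually (gt_mem_nhds (show 0 < ε / 6 by linarith)))).exists
  have h1 : Good μ U t (cylOf z (N + k)) := by
    have := h (N + k - n)
    rwa [show n + (N + k - n) = N + k by omega] at this
  have h2 : t - ε / 2 - 3 * M k ≤ birkhoff (fun x => f x + V x - V (shift x) - mf f) N z := by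
    refine ge_of_tendsto (Z.lim_birk huniq hV U hU N z) ?_
    filter_upwards [hev, h1.log hU (half_pos hε)] with β hβ h3
    have h4 := (abs_le.1 (Z.cyl β hβ k (by omega) z N)).2
    have h5 := Z.log_nonpos hβ (cylOf (shift^[N] z) k)
    linarith
  linarith

/-- the set of points all of whose cylinders are heavy -/
theorem ZT.heavy (Z : ZT f s M D Q S1 φ q μ) {μmax : Measure (MarkovShift A)}
    (huniq : ∀ ν', IsMaximizing f ν' → ν' = μmax) (hV : CalA f V (mf f)) {U : Ultrafilter ℝ}
    (hU : (U : Filter ℝ) ≤ atTop) (x₀ : MarkovShift A) :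
    μmax {x | ∀ k, Good μ U 0 (cylOf x k)}ᶜ = 0 := by
  have hev : ∀ᶠ β in (U : Filter ℝ), 1 < β := hU (eventually_gt_atTop 1)
  refine (full_of_invariant Z.up Z.summ huniq hV.1 ?_ ?_ ?_ ?_ Z.cont).1
  · rw [← closure_subset_iff_isClosed]
    intro x hx k
    obtain ⟨y, hy, hyZ⟩ := mem_closure_iff_nhds.1 hx _ (cylOf_mem_nhds x k)
    rw [← cylOf_eq hy]
    exact hyZ k
  · have h0 : Good μ U 0 (cylOf x₀ 0) := by
      intro ε hε
      filter_upwards [hev] with β hβ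
      have := Z.prob β hβ
      have e : cylOf x₀ 0 = Set.univ := by
        ext x
        exact ⟨fun _ => trivial, fun _ i hi => absurd hi (by omega)⟩
      rw [e, probReal_univ]
      rw [Real.exp_le_one_iff]
      nlinarith
    obtain ⟨z, -, hz⟩ := Good.point Z hV hU h0
    exact ⟨z, fun k => by simpa using hz k⟩
  · intro x hx k ε hε
    filter_upwards [hev, hx (k + 1) ε hε] with β hβ h1
    have := Z.prob β hβ
    refine h1.trans ?_
    rw [measureReal_def, measureReal_def]
    conv_rhs => rw [← Z.inv β hβ, Measure.map_apply continuous_shift.measurable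
      (isClopen_cylOf _ _).isOpen.measurableSet]
    refine ENNReal.toReal_mono (measure_ne_top _ _) (measure_mono ?_)
    intro y hy i hi
    rw [shift_coord, shift_coord]
    exact hy (i + 1) (by omega)
  · intro x hx
    refine le_antisymm (hV.1.2.2 x) ?_
    have := Good.rate Z huniq hV hU (z := x) (n := 0) (t := 0) (fun i => by simpa using hx i) 1
    simpa [birkhoff] using this

theorem ZT.lower (Z : ZT f s M D Q S1 φ q μ) {μmax : Measure (MarkovShift A)}
    (huniq : ∀ ν', IsMaximizing f ν' → ν' = μmax) (hV : CalA f V (mf f)) {U : Ultrafilter ℝ}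
    (hU : (U : Filter ℝ) ≤ atTop) (y : MarkovShift A) (n : ℕ) {T : ℝ}
    (hT : ∀ N, -T ≤ birkhoff (fun x => f x + V x - V (shift x) - mf f) N y) {ε : ℝ} (hε : 0 < ε) :
    ∀ᶠ β in (U : Filter ℝ), -T - ε ≤ Real.log ((μ β).real (cylOf y n)) / β := by
  have hev : ∀ᶠ β in (U : Filter ℝ), 1 < β := hU (eventually_gt_atTop 1)
  set r : MarkovShift A → ℝ := fun x => f x + V x - V (shift x) - mf f with hr
  have hr0 : ∀ x, r x ≤ 0 := hV.1.2.2
  have hsum : Summable fun j => -r (shift^[j] y) := by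
    refine summable_of_sum_range_le (c := T) (fun j => by linarith [hr0 (shift^[j] y)]) fun N => ?_
    rw [Finset.sum_neg_distrib]
    have := hT N
    simp only [birkhoff] at this
    linarith
  have hr1 : Tendsto (fun j => r (shift^[j] y)) atTop (𝓝 0) := by
    have := hsum.tendsto_atTop_zero.neg
    simpa using this
  obtain ⟨Fs, hFs⟩ := coord_mem_of_R (m := mf f) Z.up Z.summ hV.1.2.1 T
  have hrT : ∀ j, -T ≤ r (shift^[j] y) := by
    intro j
    have h1 := hT (j + 1)
    have h2 : birkhoff r (j + 1) y = birkhoff r j y + r (shift^[j] y) := Finset.sum_range_succ _ _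
    have h3 : birkhoff r j y ≤ 0 := Finset.sum_nonpos fun i _ => hr0 _
    linarith
  obtain ⟨h1, h2⟩ := limitset_full Z.up Z.summ huniq hV.1 Z.cont (z := fun j => shift^[j] y)
    (F := fun _ => Fs) (fun j i => by
      have := hFs (shift^[j + i] y) (hrT _)
      rw [shift_iter_coord, add_zero] at this
      rwa [shift_iter_coord]) (t := fun j => j + 1) (tendsto_add_atTop_nat 1)
    (Eventually.of_forall fun j => (Function.iterate_succ_apply' _ _ _).symm) hr1
  obtain ⟨p, hp, hpZ⟩ := inter_of_full h1 (Z.heavy huniq hV hU y)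
  change MapClusterPt p atTop _ at hp
  obtain ⟨k, hk1, hk⟩ := ((eventually_ge_atTop 1).and
    (Z.M0.eventually (gt_mem_nhds (show 0 < ε / 9 by linarith)))).exists
  have hfr := hp.frequently (cylOf_mem_nhds p k)
  obtain ⟨N, hN, hNn⟩ := (hfr.and_eventually (eventually_ge_atTop n)).exists
  have hlim := Z.lim_birk huniq hV U hU N y
  have h3 : -T - ε / 3 < birkhoff r N y := by linarith [hT N]
  filter_upwards [hev, (hpZ k).log hU (show 0 < ε / 3 by linarith),
    hlim.eventually (lt_mem_nhds h3)] with β hβ h4 h5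
  have := Z.prob β hβ
  have h6 := (abs_le.1 (Z.cyl β hβ k hk1 y N)).1
  rw [cylOf_eq hN] at h6
  have h7 : Real.log ((μ β).real (cylOf y (N + k))) / β ≤ Real.log ((μ β).real (cylOf y n)) / β := by
    have h8 := Z.pos β hβ y (N + k)
    have h9 : (μ β).real (cylOf y (N + k)) ≤ (μ β).real (cylOf y n) :=
      measureReal_mono (cylOf_anti y (by omega))
    have : 0 < β := by linarith
    gcongr
  linarith

end ZTsec

end Helpers

/-- **Large Deviation Principle at zero temperature** (Theorem A).
For a topologically mixing BIP countable Markov shift and a Walters potential `f` with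
`Var₁ f < ∞`, finite Gurevich pressure and a unique maximizing measure, the family of
Gibbs/equilibrium measures `μ_β` of `βf` satisfies, for every nonempty cylinder `C`,
`lim_{β→∞} (1/β) log μ_β(C) = - inf_{x ∈ C} I(x)` with
`I(x) = -Σ_{j≥0} (f + V - V∘σ - m(f))(σʲ x)` for any bounded calibrated sub-action `V`. -/
theorem large_deviation_principle
    (A : ℕ → ℕ → Bool)
    (hmix : TopologicallyMixing A)
    (hbip : FinitelyPrimitive A)
    (f : MarkovShift A → ℝ)
    (hWalters : SatisfiesWalters f)
    (hVar1 : Var1Finite f)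
    (P : ℝ → ℝ)
    (hPfin : HasGurevichPressure f (P 1))
    (μmax : Measure (MarkovShift A))
    (hmax : IsMaximizing f μmax)
    (huniq : ∀ ν', IsMaximizing f ν' → ν' = μmax)
    (h : ℝ → MarkovShift A → ℝ)
    (ν : ℝ → Measure (MarkovShift A))
    (hRPF : ∀ β : ℝ, 1 < β → IsRPF (fun x => β * f x) (P β) (h β) (ν β))
    (V : MarkovShift A → ℝ)
    (hV : IsCalibratedSubaction f V) :
    ∀ w : List ℕ, (cylinder (A := A) w).Nonempty →
      Tendsto
        (fun β : ℝ => (((1 / β) * Real.log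
            (((gibbs (h β) (ν β)) (cylinder w)).toReal) : ℝ) : EReal))
        atTop
        (𝓝 (- ((⨅ x ∈ cylinder (A := A) w,
            ∑' j : ℕ, ENNReal.ofReal
              (-(f (shift^[j] x) + V (shift^[j] x) - V (shift (shift^[j] x)) - mf f))
            : ℝ≥0∞) : EReal))) := by
  rintro w ⟨x₀, hx₀⟩
  obtain ⟨s, D, Q, S1, Z⟩ := exists_ZT hbip f hWalters hVar1 P hPfin h ν hRPF x₀
  have hC : CalA f V (mf f) := ⟨⟨hV.1, hV.2.1, hV.2.2.1⟩, hV.2.2.2⟩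
  set μ : ℝ → Measure (MarkovShift A) := fun β => gibbs (h β) (ν β) with hμ
  set n := w.length with hn
  have hcyl : ∀ y ∈ cylinder (A := A) w, cylinder (A := A) w = cylOf y n :=
    fun y hy => cylinder_eq_cylOf hy
  have hfun : ∀ β : ℝ, (1 / β) * Real.log (((gibbs (h β) (ν β)) (cylinder w)).toReal) =
      Real.log ((μ β).real (cylinder w)) / β := by
    intro β
    rw [measureReal_def, one_div_mul_eq_div]
  simp only [hfun]
  set I : MarkovShift A → ℝ≥0∞ := fun x => ∑' j : ℕ, ENNReal.ofReal
    (-(f (shift^[j] x) + V (shift^[j] x) - V (shift (shift^[j] x)) - mf f)) with hI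
  have hr0 : ∀ x, 0 ≤ -(f x + V x - V (shift x) - mf f) := fun x => by linarith [hC.1.2.2 x]
  have hIpart : ∀ (x : MarkovShift A) (N : ℕ),
      ∑ j ∈ Finset.range N, ENNReal.ofReal
        (-(f (shift^[j] x) + V (shift^[j] x) - V (shift (shift^[j] x)) - mf f)) =
      ENNReal.ofReal (-birkhoff (fun x => f x + V x - V (shift x) - mf f) N x) := by
    intro x N
    rw [← ENNReal.ofReal_sum_of_nonneg (fun j _ => hr0 _), Finset.sum_neg_distrib]
    rfl
  rw [tendsto_order]
  constructor
  · intro a ha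
    by_contra hcon
    rw [Filter.not_eventually] at hcon
    obtain ⟨U, hU, hUa⟩ := frequently_iff_exists_ultrafilter hcon
    obtain ⟨c, hc1, hc2⟩ := EReal.lt_iff_exists_real_btwn.1 ha
    rw [EReal.lt_neg_comm] at hc2
    have hlt : (⨅ x ∈ cylinder (A := A) w, I x) < ENNReal.ofReal (-c) := by
      have h1 : (0 : EReal) ≤ ((-c : ℝ) : EReal) := by
        refine le_trans ?_ hc2.le
        exact EReal.coe_ennreal_nonneg _
      rw [← EReal.coe_ennreal_lt_coe_ennreal_iff, EReal.coe_ennreal_ofReal,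
        max_eq_left (by exact_mod_cast h1)]
      exact hc2
    simp only [iInf_lt_iff] at hlt
    obtain ⟨y, hy, hyI⟩ := hlt
    have hlt' : (I y).toReal < -c := by
      rw [ENNReal.lt_ofReal_iff_toReal_lt hyI.ne_top] at hyI
      exact hyI
    have hT : ∀ N, -(I y).toReal ≤ birkhoff (fun x => f x + V x - V (shift x) - mf f) N y := by
      intro N
      have h1 : ENNReal.ofReal (-birkhoff (fun x => f x + V x - V (shift x) - mf f) N y) ≤ I y := by
        rw [← hIpart]
        exact ENNReal.sum_le_tsum _
      have h2 := (ENNReal.ofReal_le_iff_le_toReal hyI.ne_top).1 h1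
      linarith
    have h3 := Z.lower huniq hC hU y n hT (ε := -c - (I y).toReal) (by linarith)
    obtain ⟨β, h4, h5⟩ := (h3.and hUa).exists
    rw [← hcyl y hy] at h4
    refine h5 (hc1.trans_le ?_)
    exact_mod_cast (by linarith : c ≤ Real.log ((μ β).real (cylinder w)) / β)
  · intro a ha
    by_contra hcon
    rw [Filter.not_eventually] at hcon
    obtain ⟨U, hU, hUa⟩ := frequently_iff_exists_ultrafilter hcon
    obtain ⟨c, hc1, hc2⟩ := EReal.lt_iff_exists_real_btwn.1 ha
    have hG : Good μ U c (cylOf x₀ n) := by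
      intro ε hε
      filter_upwards [hUa, hU (eventually_gt_atTop 1)] with β h1 hβ
      rw [hcyl x₀ hx₀, not_lt] at h1
      have h2 : c ≤ Real.log ((μ β).real (cylOf x₀ n)) / β := by
        exact_mod_cast hc2.le.trans h1
      rw [le_div_iff₀ (by linarith)] at h2
      rw [← Real.le_log_iff_exp_le (Z.pos β hβ x₀ n)]
      nlinarith
    obtain ⟨z, hz, hzG⟩ := Good.point Z hC hU hG
    have hrate := Good.rate Z huniq hC hU hzG
    have hc0 : c ≤ 0 := by simpa [birkhoff] using hrate 0
    have hzI : I z ≤ ENNReal.ofReal (-c) := by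
      refine ENNReal.tsum_le_of_sum_range_le fun N => ?_
      rw [hIpart]
      exact ENNReal.ofReal_le_ofReal (by linarith [hrate N])
    have hinf : (⨅ x ∈ cylinder (A := A) w, I x) ≤ ENNReal.ofReal (-c) :=
      (iInf₂_le z (by rw [hcyl x₀ hx₀]; exact hz)).trans hzI
    rw [← EReal.coe_ennreal_le_coe_ennreal_iff, EReal.coe_ennreal_ofReal,
      max_eq_left (by linarith)] at hinf
    have h6 := EReal.neg_le_neg_iff.2 hinf
    rw [EReal.coe_neg, neg_neg] at h6
    exact absurd (h6.trans_lt hc1) (lt_irrefl _)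

end MarkovShift
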